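/- arXiv:0805.0730 — 4 statements merged into one kernel-verified Lean document; each statement's English description precedes it below -/
import Mathlib

section
/- Let s be the epistandard word directed by an infinite word Δ = x1 x2 x3 ⋯ over a finite alphabet A, and let m be the smallest positive integer such that the set of letters occurring in x1⋯xm equals the set of letters occurring in s. Then for every n ≥ m, Pal(x1⋯xn) is a quasiperiod of s. -/
/-!
The point is that a letter `x` occurring in `v` makes `Pal (v x)` a union of two overlapping or
adjacent copies of `P = Pal v`. Write `v = v₁ x v₂`. Then `Pal v₁ · x` is a prefix of the palindrome
`P`, so `x · Pal v₁` is a suffix of `P` and `x · Pal v₁ · x` is a palindromic suffix of `P x`, of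
length at least `2`. Hence `|Pal (v x)| ≤ 2 |P|`, and the palindrome `Pal (v x)` both begins and
ends with `P` (`pal_snoc_eq`).

Once all letters of `s` have appeared in `v`, this applies at every later step, so by induction
`Pal (x₁⋯xₙ)` covers each longer palindromic prefix `Pal (x₁⋯x_N)` (`cover_pal`), and therefore
covers `s`. A pointwise cover of an infinite word yields the sequence of occurrences
required of a quasiperiod (`isQuasiperiod_of_cover`).
-/

namespace EpiQP

/-- `u` is a prefix of the infinite word `w`. -/
def IsPref {σ : Type*} (u : List σ) (w : ℕ → σ) : Prop :=
  ∀ (i : ℕ) (h : i < u.length), u.get ⟨i, h⟩ = w i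

/-- The prefix of length `n` of the infinite word `w`. -/
def prefWord {σ : Type*} (w : ℕ → σ) (n : ℕ) : List σ :=
  List.ofFn (fun i : Fin n => w i)

/-- The finite word `u` occurs in the infinite word `w` at position `k`. -/
def OccursAt {σ : Type*} (u : List σ) (w : ℕ → σ) (k : ℕ) : Prop :=
  ∀ (i : ℕ) (h : i < u.length), u.get ⟨i, h⟩ = w (k + i)

/-- `u` is a (finite) factor of the infinite word `w`. -/
def IsFactorInf {σ : Type*} (u : List σ) (w : ℕ → σ) : Prop :=
  ∃ k, OccursAt u w k

/-- An infinite word is recurrent if each of its factors occurs infinitely often in it. -/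
def Recurrent {σ : Type*} (w : ℕ → σ) : Prop :=
  ∀ (u : List σ) (k : ℕ), OccursAt u w k → ∀ N, ∃ m, N ≤ m ∧ OccursAt u w m

/-- `u` is a quasiperiod of the infinite word `w`: `u` is non-empty and there is a
sequence of prefixes `p n ++ u` of `w` with `p 0 = ε` and
`|p n| < |p (n+1)| ≤ |p n ++ u|`. -/
def IsQuasiperiod {A : Type*} (u : List A) (w : ℕ → A) : Prop :=
  u ≠ [] ∧ ∃ p : ℕ → List A, p 0 = [] ∧
    (∀ n, (p n).length < (p (n + 1)).length ∧
      (p (n + 1)).length ≤ (p n).length + u.length) ∧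
    ∀ n, IsPref (p n ++ u) w

/-- An infinite word is quasiperiodic if it has a quasiperiod. -/
def Quasiperiodic {A : Type*} (w : ℕ → A) : Prop := ∃ u, IsQuasiperiod u w

/-- A set `X` of finite words covers the infinite word `w`. -/
def CoveredBy {A : Type*} (X : Set (List A)) (w : ℕ → A) : Prop :=
  ∃ (p z : ℕ → List A), p 0 = [] ∧ (∀ n, z n ∈ X) ∧
    (∀ n, (p n).length < (p (n + 1)).length ∧
      (p (n + 1)).length ≤ (p n).length + (z n).length) ∧
    ∀ n, IsPref (p n ++ z n) w

/-- The morphism `L_a` : `a ↦ a`, `b ↦ ab` for `b ≠ a`. -/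
def Lm {A : Type*} [DecidableEq A] (a : A) (u : List A) : List A :=
  u.flatMap (fun b => if b = a then [a] else [a, b])

/-- The morphism `R_a` : `a ↦ a`, `b ↦ ba` for `b ≠ a`. -/
def Rm {A : Type*} [DecidableEq A] (a : A) (u : List A) : List A :=
  u.flatMap (fun b => if b = a then [a] else [b, a])

/-- The pure epistandard morphism `μ_v = L_{v_1} ∘ ⋯ ∘ L_{v_k}` for `v = v_1 ⋯ v_k`. -/
def muL {A : Type*} [DecidableEq A] (v : List A) (u : List A) : List A :=
  v.foldr Lm u

/-- The pure episturmian morphism `μ_{v̄} = R_{v_1} ∘ ⋯ ∘ R_{v_k}` for `v = v_1 ⋯ v_k`. -/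
def muR {A : Type*} [DecidableEq A] (v : List A) (u : List A) : List A :=
  v.foldr Rm u

/-- Spinned letters are elements of `A × Bool`: `(a, false)` is the `L`-spinned letter `a`
and `(a, true)` is the `R`-spinned letter `ā`.  `μ` on a spinned letter. -/
def muS {A : Type*} [DecidableEq A] (x : A × Bool) : List A → List A :=
  if x.2 then Rm x.1 else Lm x.1

/-- The pure episturmian morphism `μ_{w̆}` directed by the finite spinned word `w̆`. -/
def muW {A : Type*} [DecidableEq A] (w : List (A × Bool)) (u : List A) : List A :=
  w.foldr muS u

/-- `x` is the image of the infinite word `w` under the (letterwise) morphism whose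
image on the letter `a` is `f a` (all images being non-empty). -/
def SubstOf {A : Type*} (f : A → List A) (w x : ℕ → A) : Prop :=
  ∀ n, IsPref ((prefWord w n).flatMap f) x

/-- The spinned infinite word `Δ` directs the infinite word `t`: there is a sequence
`ts` of recurrent infinite words with `ts 0 = t` and `ts n = μ_{Δ n}(ts (n+1))`. -/
def Directs {A : Type*} [DecidableEq A] (Δ : ℕ → A × Bool) (t : ℕ → A) : Prop :=
  ∃ ts : ℕ → (ℕ → A), ts 0 = t ∧ (∀ n, Recurrent (ts n)) ∧
    ∀ n, SubstOf (fun a => muS (Δ n) [a]) (ts (n + 1)) (ts n)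

/-- An infinite word is episturmian iff it is directed by some spinned infinite word. -/
def Episturmian {A : Type*} [DecidableEq A] (t : ℕ → A) : Prop :=
  ∃ Δ : ℕ → A × Bool, Directs Δ t

/-- The palindromic right-closure `w⁽⁺⁾`: the shortest palindrome having `w` as a
prefix, obtained by appending the reverse of `w` deprived of its longest
palindromic suffix. -/
def palClosure {A : Type*} [DecidableEq A] (w : List A) : List A :=
  w ++ (w.take (w.length -
    Nat.findGreatest
      (fun k => (w.drop (w.length - k)).reverse = w.drop (w.length - k)) w.length)).reverse

/-- Iterated palindromic closure: `Pal ε = ε`, `Pal (w x) = (Pal w · x)⁽⁺⁾`. -/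
def Pal {A : Type*} [DecidableEq A] (w : List A) : List A :=
  w.foldl (fun p x => palClosure (p ++ [x])) []

/-- `s` is the epistandard word directed by `Δ`, i.e. `s = lim_n Pal(Δ_1 ⋯ Δ_n)`. -/
def IsEpistandardOf {A : Type*} [DecidableEq A] (Δ : ℕ → A) (s : ℕ → A) : Prop :=
  ∀ n, IsPref (Pal (prefWord Δ n)) s

/-- The concatenation of a finite word and an infinite word. -/
def catInf {σ : Type*} (u : List σ) (y : ℕ → σ) : ℕ → σ :=
  fun n => if h : n < u.length then u.get ⟨n, h⟩ else y (n - u.length)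

/-- Prepending a letter to an infinite word. -/
def consInf {σ : Type*} (a : σ) (w : ℕ → σ) : ℕ → σ :=
  fun n => match n with
  | 0 => a
  | Nat.succ k => w k

def UltimatelyPeriodic {A : Type*} (w : ℕ → A) : Prop :=
  ∃ p N : ℕ, 0 < p ∧ ∀ n, N ≤ n → w (n + p) = w n

/-- A factor `u` of `t` is right special if `ua`, `ub` are factors of `t` for two
distinct letters `a`, `b`. -/
def RightSpecial {A : Type*} (u : List A) (t : ℕ → A) : Prop :=
  ∃ a b : A, a ≠ b ∧ IsFactorInf (u ++ [a]) t ∧ IsFactorInf (u ++ [b]) t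

/-- The combinatorial definition of episturmian words: the set of factors is closed
under reversal, and there is at most one right special factor of each length. -/
def EpisturmianC {A : Type*} (t : ℕ → A) : Prop :=
  (∀ u : List A, IsFactorInf u t → IsFactorInf u.reverse t) ∧
  ∀ u v : List A, RightSpecial u t → RightSpecial v t → u.length = v.length → u = v

/-- The shifting factor `S_{w̆}` of `μ_{w̆}` (so that `μ_{w̆}(v) = S_{w̆}⁻¹ μ_w(v) S_{w̆}`):
`S_ε = ε`, `S_{a w̆} = L_a(S_{w̆})`, `S_{ā w̆} = L_a(S_{w̆}) a`. -/
def Sfac {A : Type*} [DecidableEq A] : List (A × Bool) → List A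
  | [] => []
  | x :: v => if x.2 then Lm x.1 (Sfac v) ++ [x.1] else Lm x.1 (Sfac v)

/-- A spinned infinite word is normalized if it contains infinitely many `L`-spinned
letters but no factor of the form `ā v̄ a` (`v̄` being `R`-spinned). -/
def NormalizedInf {A : Type*} (Δ : ℕ → A × Bool) : Prop :=
  (∀ N, ∃ n, N ≤ n ∧ (Δ n).2 = false) ∧
  ∀ (a : A) (i j : ℕ), i < j → Δ i = (a, true) →
    (∀ k, i < k → k < j → (Δ k).2 = true) → Δ j ≠ (a, false)

/-- A finite spinned word is normalized if it has no factor of the form `ā v̄ a`. -/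
def NormalizedFin {A : Type*} (u : List (A × Bool)) : Prop :=
  ¬ ∃ (a : A) (w1 w2 : List (A × Bool)) (z : List A),
      u = w1 ++ (a, true) :: (z.map (fun x => (x, true)) ++ (a, false) :: w2)

/-- Strict lexicographic order on infinite words induced by the order on letters. -/
def LexLt {A : Type*} [LinearOrder A] (x y : ℕ → A) : Prop :=
  ∃ n : ℕ, (∀ i, i < n → x i = y i) ∧ x n < y n

/-- An infinite word is an infinite Lyndon word if it is strictly lexicographically
smaller than each of its proper suffixes. -/
def InfLyndon {A : Type*} [LinearOrder A] (w : ℕ → A) : Prop :=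
  ∀ i : ℕ, 0 < i → LexLt w (fun n => w (n + i))

/-- A return to `v` in `w`: the segment of `w` between two consecutive occurrences
of `v`. -/
def IsReturn {σ : Type*} (v : List σ) (w : ℕ → σ) (r : List σ) : Prop :=
  ∃ k k' : ℕ, k < k' ∧ OccursAt v w k ∧ OccursAt v w k' ∧
    (∀ j, k < j → j < k' → ¬ OccursAt v w j) ∧
    r = List.ofFn (fun i : Fin (k' - k) => w (k + i))

/-- `u` is a quasiperiod of the finite word `z`: every position of `z` falls within
some occurrence of `u` in `z`. -/
def IsQuasiperiodFin {A : Type*} (u z : List A) : Prop :=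
  u ≠ [] ∧ ∀ i, i < z.length → ∃ k, k ≤ i ∧ i < k + u.length ∧ u <+: z.drop k


/-! ### Palindromic closure and iterated palindromic closure -/

theorem palClosure_reverse {A : Type*} [DecidableEq A] (w : List A) :
    (palClosure w).reverse = palClosure w := by
  unfold palClosure
  set k := Nat.findGreatest
    (fun k => (w.drop (w.length - k)).reverse = w.drop (w.length - k)) w.length with hk
  have hspec : (w.drop (w.length - k)).reverse = w.drop (w.length - k) :=
    Nat.findGreatest_spec
      (P := fun k => (w.drop (w.length - k)).reverse = w.drop (w.length - k))
      (Nat.zero_le w.length) (by simp)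
  have hw : w.take (w.length - k) ++ w.drop (w.length - k) = w := List.take_append_drop _ _
  generalize w.take (w.length - k) = a at *
  generalize w.drop (w.length - k) = b at *
  subst hw
  simp [hspec]

theorem prefix_palClosure {A : Type*} [DecidableEq A] (w : List A) : w <+: palClosure w :=
  List.prefix_append _ _

/-- A palindromic suffix `b` of a word `a ++ b` bounds the length of its palindromic closure:
it suffices to append `a.reverse`. -/
theorem length_palClosure_le {A : Type*} [DecidableEq A] (a b : List A) (hb : b.reverse = b) :
    (palClosure (a ++ b)).length ≤ (a ++ b).length + a.length := by
  unfold palClosure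
  have h := Nat.le_findGreatest
    (P := fun k => ((a ++ b).drop ((a ++ b).length - k)).reverse
      = (a ++ b).drop ((a ++ b).length - k))
    (m := b.length) (n := (a ++ b).length) (by simp) (by simp [hb])
  simp only [List.length_append, List.length_reverse, List.length_take] at h ⊢
  omega

theorem pal_snoc {A : Type*} [DecidableEq A] (v : List A) (x : A) :
    Pal (v ++ [x]) = palClosure (Pal v ++ [x]) := by
  simp [Pal]

theorem pal_reverse {A : Type*} [DecidableEq A] (v : List A) : (Pal v).reverse = Pal v := by
  induction v using List.reverseRecOn with
  | nil => rfl
  | append_singleton v x _ => rw [pal_snoc, palClosure_reverse]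

theorem pal_snoc_prefix {A : Type*} [DecidableEq A] (v : List A) (x : A) :
    Pal v ++ [x] <+: Pal (v ++ [x]) := by
  rw [pal_snoc]; exact prefix_palClosure _

theorem pal_prefix_append {A : Type*} [DecidableEq A] (v w : List A) :
    Pal v <+: Pal (v ++ w) := by
  induction w using List.reverseRecOn with
  | nil => simp
  | append_singleton w x ih =>
    rw [← List.append_assoc]
    exact ih.trans ((List.prefix_append _ _).trans (pal_snoc_prefix _ _))

theorem length_pal_snoc_le {A : Type*} [DecidableEq A] (v : List A) (x : A) (hx : x ∈ v) :
    (Pal (v ++ [x])).length ≤ 2 * (Pal v).length := by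
  obtain ⟨v₁, v₂, rfl⟩ := List.append_of_mem hx
  have h1 : Pal v₁ ++ [x] <+: Pal (v₁ ++ x :: v₂) := by
    have := (pal_snoc_prefix v₁ x).trans (pal_prefix_append (v₁ ++ [x]) v₂)
    simpa using this
  -- Reversal turns the prefix `Pal v₁ · x` of the palindrome into the suffix `x · Pal v₁`.
  obtain ⟨t, ht⟩ := List.reverse_suffix.mpr h1
  rw [pal_reverse, List.reverse_append, pal_reverse] at ht
  rw [pal_snoc, ← ht, List.append_assoc]
  have h := length_palClosure_le t (x :: (Pal v₁ ++ [x])) (by simp [pal_reverse])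
  simp only [List.reverse_singleton, List.length_append, List.length_cons, List.length_nil,
    List.nil_append, List.cons_append] at h ⊢
  omega

/-- If `x` occurs in `v`, then `Pal (v x)` begins and ends with `Pal v`, and these two
occurrences leave no gap. -/
theorem pal_snoc_eq {A : Type*} [DecidableEq A] (v : List A) (x : A) (hx : x ∈ v) :
    ∃ t t' : List A, Pal (v ++ [x]) = Pal v ++ t ∧ Pal (v ++ [x]) = t' ++ Pal v ∧
      t'.length ≤ (Pal v).length := by
  have hp := pal_prefix_append v [x]
  obtain ⟨t, ht⟩ := hp
  obtain ⟨t', ht'⟩ := List.reverse_suffix.mpr (pal_prefix_append v [x])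
  rw [pal_reverse, pal_reverse] at ht'
  refine ⟨t, t', ht.symm, ht'.symm, ?_⟩
  have := length_pal_snoc_le v x hx
  rw [← ht', List.length_append] at this
  omega

/-! ### Prefixes of the directive word -/

theorem prefWord_succ {A : Type*} (w : ℕ → A) (n : ℕ) :
    prefWord w (n + 1) = prefWord w n ++ [w n] := by
  simp [prefWord, List.ofFn_succ_last, -List.ofFn_succ]

theorem prefWord_mem_mono {A : Type*} (w : ℕ → A) {m n : ℕ} (h : m ≤ n) {a : A}
    (ha : a ∈ prefWord w m) : a ∈ prefWord w n := by
  induction n, h using Nat.le_induction with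
  | base => exact ha
  | succ n _ ih => rw [prefWord_succ]; exact List.mem_append_left _ ih

theorem le_length_pal {A : Type*} [DecidableEq A] (w : ℕ → A) (n : ℕ) :
    n ≤ (Pal (prefWord w n)).length := by
  induction n with
  | zero => simp
  | succ n ih =>
    have := (pal_snoc_prefix (prefWord w n) (w n)).length_le
    rw [prefWord_succ]
    simp only [List.length_append, List.length_singleton] at this
    omega

theorem mem_of_isEpistandardOf {A : Type*} [DecidableEq A] {Δ s : ℕ → A}
    (hs : IsEpistandardOf Δ s) (N : ℕ) : ∃ i, s i = Δ N := by
  obtain ⟨t, ht⟩ := pal_snoc_prefix (prefWord Δ N) (Δ N)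
  have h := hs (N + 1)
  rw [prefWord_succ, ← ht] at h
  refine ⟨(Pal (prefWord Δ N)).length, ?_⟩
  rw [← h (Pal (prefWord Δ N)).length (by simp)]
  simp

/-! ### Coverings of finite and infinite words -/

theorem cover_append {A : Type*} {u P Q t t' : List A} (h : IsQuasiperiodFin u P)
    (h1 : Q = P ++ t) (h2 : Q = t' ++ P) (hl : t'.length ≤ P.length) :
    IsQuasiperiodFin u Q := by
  refine ⟨h.1, fun i hi => ?_⟩
  by_cases hiP : i < P.length
  · obtain ⟨k, hk, hk', hu⟩ := h.2 i hiP
    refine ⟨k, hk, hk', ?_⟩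
    rw [h1, List.drop_append_of_le_length (by omega)]
    exact hu.trans (List.prefix_append _ _)
  · have hi' : i - t'.length < P.length := by
      rw [h2, List.length_append] at hi; omega
    obtain ⟨k, hk, hk', hu⟩ := h.2 _ hi'
    refine ⟨t'.length + k, by omega, by omega, ?_⟩
    rw [h2, List.drop_length_add_append]
    exact hu

theorem cover_pal {A : Type*} [DecidableEq A] (Δ : ℕ → A) {n : ℕ} (hn : 0 < n)
    (hΔ : ∀ N, Δ N ∈ prefWord Δ n) (N : ℕ) (hN : n ≤ N) :
    IsQuasiperiodFin (Pal (prefWord Δ n)) (Pal (prefWord Δ N)) := by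
  induction N, hN using Nat.le_induction with
  | base =>
    refine ⟨?_, fun i hi => ⟨0, by omega, by omega, by simp⟩⟩
    have := le_length_pal Δ n
    exact List.ne_nil_of_length_pos (by omega)
  | succ N hN ih =>
    obtain ⟨t, t', h1, h2, hl⟩ :=
      pal_snoc_eq (prefWord Δ N) (Δ N) (prefWord_mem_mono Δ hN (hΔ N))
    rw [prefWord_succ]
    exact cover_append ih h1 h2 hl

theorem OccursAt.of_prefix_drop {A : Type*} {u P : List A} {s : ℕ → A} {k : ℕ}
    (hP : IsPref P s) (hu : u <+: P.drop k) : OccursAt u s k := by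
  intro i hi
  have hl := hu.length_le
  rw [List.length_drop] at hl
  rw [← hP (k + i) (by omega)]
  have := hu.getElem hi
  simpa using this

theorem isQuasiperiod_of_cover {A : Type*} {u : List A} {s : ℕ → A} (hu : u ≠ [])
    (h0 : OccursAt u s 0)
    (h : ∀ i, ∃ k, k ≤ i ∧ i < k + u.length ∧ OccursAt u s k) : IsQuasiperiod u s := by
  choose f hf1 hf2 hf3 using h
  -- The next occurrence is one covering the first position after the current occurrence.
  let q : ℕ → ℕ := fun n => Nat.rec 0 (fun _ k => f (k + u.length)) n
  have hq : ∀ n, q (n + 1) = f (q n + u.length) := fun _ => rfl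
  have hocc : ∀ n, OccursAt u s (q n) := by
    rintro (_ | n)
    · exact h0
    · exact hf3 _
  refine ⟨hu, fun n => prefWord s (q n), by simp [prefWord, q], fun n => ?_, fun n => ?_⟩
  · have h1 := hf1 (q n + u.length)
    have h2 := hf2 (q n + u.length)
    simp only [prefWord, List.length_ofFn, hq]
    omega
  · intro i hi
    rcases lt_or_ge i (q n) with hiq | hiq
    · simp [prefWord, hiq]
    · have hiu : i - q n < u.length := by
        simp only [prefWord, List.length_append, List.length_ofFn] at hi
        omega
      have := hocc n (i - q n) hiu
      rw [Nat.add_sub_cancel' (by omega)] at this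
      simpa [prefWord, List.getElem_append, hiq.not_gt] using this

/-- every long enough iterated palindromic prefix of an epistandard word
(namely `Pal(x₁⋯xₙ)` for `n ≥ m`, where `m` is least positive with
`Alph(x₁⋯x_m) = Alph(s)`) is a quasiperiod of it. -/
theorem epistandard_palindromic_prefix_quasiperiod
    {A : Type*} [Fintype A] [DecidableEq A]
    (Δ : ℕ → A) (s : ℕ → A) (hs : IsEpistandardOf Δ s)
    (m : ℕ) (hm : 0 < m)
    (hAlph : ∀ a : A, a ∈ prefWord Δ m ↔ ∃ i, s i = a)
    (hmin : ∀ m', 0 < m' → (∀ a : A, a ∈ prefWord Δ m' ↔ ∃ i, s i = a) → m ≤ m')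
    (n : ℕ) (hn : m ≤ n) :
    IsQuasiperiod (Pal (prefWord Δ n)) s := by
  have hΔ : ∀ N, Δ N ∈ prefWord Δ n := fun N =>
    prefWord_mem_mono Δ hn ((hAlph _).2 (mem_of_isEpistandardOf hs N))
  have hcov := cover_pal Δ (hm.trans_le hn) hΔ
  refine isQuasiperiod_of_cover (hcov n le_rfl).1
    (OccursAt.of_prefix_drop (hs n) (by simp)) fun i => ?_
  -- `|Pal (x₁⋯x_N)| ≥ N`, so `N = n + i + 1` gives a prefix of `s` that contains position `i`.
  have hlen := le_length_pal Δ (n + i + 1)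
  obtain ⟨k, hk, hk', hu⟩ := (hcov (n + i + 1) (by omega)).2 i (by omega)
  exact ⟨k, hk, hk', OccursAt.of_prefix_drop (hs _) hu⟩

end EpiQP
end

section
/- Every episturmian word is ultimately quasiperiodic: every episturmian word has a suffix that is quasiperiodic. -/
/-!
The argument works with windows `[k, k + n)` of `t` in place of lists.

Closure under reversal makes `t` recurrent: reversing a long prefix pushes a given factor far to the
right, and reversing again restores it.

Let `q` be a palindromic factor of `t`. As long as it is not right special, closure under reversal
forces every occurrence of `q` (not at position `0`) to extend to the same palindrome `y q y`.
If this never stops, all occurrences of `q` have the same future and `t` is ultimately periodic, hence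
ultimately quasiperiodic. Otherwise `q` is the centre of a right special palindrome
(`palindrome_extension`). Since suffixes of right special factors are right special and there is at
most one of each length, the longest of the right special palindromes obtained from single letters
contains all letters of `t`. Call it `u`.

This `u` is a quasiperiod: an occurrence of `u`, followed by a letter `a`, is followed by another
occurrence at distance at most `|u|` (`exists_next_occurrence`). Indeed `u a` has a palindromic suffix
of length at least `2` (`exists_pal_suffix`). Let `q` be the longest one and grow it as above. If the
growth lasts until the left end of `u` is reached, `u` reappears as the mirror image. If it stops
earlier at a right special palindrome `Q` longer than `u`, then `u` is a suffix, hence a prefix, of `Q`.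
If `Q` is not longer than `u`, it is a suffix and a prefix of `u`, and comparing the two places
yields a longer palindromic suffix of `u a`, which is impossible.
-/

namespace EpiQP

/-- The windows of length `n` of `t` at positions `k` and `l` carry the same word. -/
def SameWin {A : Type*} (t : ℕ → A) (k l n : ℕ) : Prop := ∀ i < n, t (k + i) = t (l + i)

/-- The window `[k, k + n)` of `t` is a palindrome. -/
def PalWin {A : Type*} (t : ℕ → A) (k n : ℕ) : Prop := ∀ i < n, t (k + i) = t (k + (n - 1 - i))

/-- The word in the window `[k, k + n)` of `t` is right special. -/
def RSWin {A : Type*} (t : ℕ → A) (k n : ℕ) : Prop :=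
  ∃ l m, SameWin t k l n ∧ SameWin t k m n ∧ t (l + n) ≠ t (m + n)

/-- Closure under reversal, in terms of windows. -/
def RevClosed {A : Type*} (t : ℕ → A) : Prop :=
  ∀ k n, ∃ l, ∀ i < n, t (l + i) = t (k + (n - 1 - i))

/-- Uniqueness of the right special factor of each length, in terms of windows. -/
def RSUnique {A : Type*} (t : ℕ → A) : Prop :=
  ∀ k k' n, RSWin t k n → RSWin t k' n → SameWin t k k' n

section Windows

variable {A : Type*} {t : ℕ → A}

/-! ### Translation between lists and windows -/

theorem EpisturmianC.revClosed (ht : EpisturmianC t) : RevClosed t := by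
  intro k n
  obtain ⟨l, hl⟩ := ht.1 (List.ofFn (fun i : Fin n => t (k + i))) ⟨k, by intro i h; simp⟩
  refine ⟨l, fun i hi => ?_⟩
  have := hl i (by simpa using hi)
  simpa [List.getElem_reverse] using this.symm

theorem RSWin.rightSpecial {k n : ℕ} (h : RSWin t k n) :
    RightSpecial (List.ofFn (fun i : Fin n => t (k + i))) t := by
  obtain ⟨l, m, hl, hm, hne⟩ := h
  have key : ∀ l, SameWin t k l n →
      IsFactorInf (List.ofFn (fun i : Fin n => t (k + i)) ++ [t (l + n)]) t := by
    intro l hl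
    refine ⟨l, fun i hi => ?_⟩
    simp only [List.length_append, List.length_ofFn, List.length_singleton] at hi
    rw [List.get_eq_getElem, List.getElem_append]
    by_cases h : i < n
    · simpa [h] using hl i h
    · obtain rfl : i = n := by omega
      simp
  exact ⟨_, _, hne, key l hl, key m hm⟩

theorem EpisturmianC.rsUnique (ht : EpisturmianC t) : RSUnique t := by
  intro k k' n h h' i hi
  have := ht.2 _ _ h.rightSpecial h'.rightSpecial (by simp)
  exact congrFun (List.ofFn_injective this) ⟨i, hi⟩

/-- A factor whose occurrences from position `k` on follow each other at distance at most its length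
is a quasiperiod of the suffix of `t` at `k`. -/
theorem quasiperiodic_of_step {k n : ℕ} (hn : 0 < n)
    (h : ∀ p, k ≤ p → SameWin t k p n → ∃ g, 0 < g ∧ g ≤ n ∧ SameWin t k (p + g) n) :
    Quasiperiodic (fun j => t (j + k)) := by
  have h' : ∀ p : {p // k ≤ p ∧ SameWin t k p n}, ∃ q : {p // k ≤ p ∧ SameWin t k p n},
      p.1 < q.1 ∧ q.1 ≤ p.1 + n := by
    rintro ⟨p, hp, hs⟩
    obtain ⟨g, hg, hgn, hs'⟩ := h p hp hs
    exact ⟨⟨p + g, by omega, hs'⟩, by dsimp; omega, by dsimp; omega⟩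
  choose f hf1 hf2 using h'
  let s : ℕ → {p // k ≤ p ∧ SameWin t k p n} :=
    fun j => f^[j] ⟨k, le_rfl, fun i _ => rfl⟩
  have hs : ∀ j, s (j + 1) = f (s j) := fun j => Function.iterate_succ_apply' _ _ _
  refine ⟨List.ofFn (fun i : Fin n => t (k + i)), ?_,
    fun j => List.ofFn (fun i : Fin ((s j).1 - k) => t (k + i)), ?_, ?_, ?_⟩
  · intro h0
    have := congrArg List.length h0
    simp at this
    omega
  · simp [s]
  · intro j
    have h1 := hf1 (s j)
    have h2 := hf2 (s j)
    have h3 := (s j).2.1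
    simp only [List.length_ofFn, hs]
    omega
  · intro j i hi
    have h3 := (s j).2.1
    simp only [List.length_append, List.length_ofFn] at hi
    rw [List.get_eq_getElem, List.getElem_append]
    by_cases h : i < (s j).1 - k
    · simp [h, Nat.add_comm]
    · have := (s j).2.2 (i - ((s j).1 - k)) (by omega)
      simp only [List.length_ofFn, h, dite_false, List.getElem_ofFn]
      rw [this]
      congr 1
      omega

theorem quasiperiodic_of_ultimatelyPeriodic (h : UltimatelyPeriodic t) :
    ∃ k, Quasiperiodic (fun n => t (n + k)) := by
  obtain ⟨p, N, hp, h⟩ := h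
  refine ⟨N, quasiperiodic_of_step hp fun q hq hs => ⟨p, hp, le_rfl, fun i hi => ?_⟩⟩
  rw [hs i hi, ← h (q + i) (by omega)]
  congr 1
  omega

/-! ### Recurrence and right special suffixes -/

theorem RevClosed.recurrent (hr : RevClosed t) (k n N : ℕ) : ∃ l, N ≤ l ∧ SameWin t k l n := by
  obtain ⟨l, hl⟩ := hr k n
  -- The reversal of `[0, N + l + n)` carries the reversal of `[l, l + n)` at offset `N`.
  obtain ⟨L, hL⟩ := hr 0 (N + l + n)
  refine ⟨L + N, by omega, fun i hi => ?_⟩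
  have h1 := hL (N + i) (by omega)
  have h2 := hl (n - 1 - i) (by omega)
  rw [show L + N + i = L + (N + i) by omega, h1,
    show 0 + (N + l + n - 1 - (N + i)) = l + (n - 1 - i) by omega, h2]
  congr 1
  omega

theorem RSWin.suffix {k n m : ℕ} (h : RSWin t k n) (hm : m ≤ n) : RSWin t (k + (n - m)) m := by
  obtain ⟨l, l', hl, hl', hne⟩ := h
  refine ⟨l + (n - m), l' + (n - m), fun i hi => ?_, fun i hi => ?_, ?_⟩
  · have := hl (n - m + i) (by omega)
    simpa [Nat.add_assoc] using this
  · have := hl' (n - m + i) (by omega)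
    simpa [Nat.add_assoc] using this
  · rwa [show l + (n - m) + m = l + n by omega, show l' + (n - m) + m = l' + n by omega]

theorem RSWin.congr {k l n : ℕ} (h : RSWin t k n) (hs : SameWin t k l n) : RSWin t l n := by
  obtain ⟨a, b, ha, hb, hne⟩ := h
  exact ⟨a, b, fun i hi => (hs i hi).symm.trans (ha i hi),
    fun i hi => (hs i hi).symm.trans (hb i hi), hne⟩

/-! ### Growth of palindromes -/

/-- As long as the central palindromic extensions of a palindrome are not right special, they are
determined by it: any two occurrences extend by `i` letters on both sides to the same palindrome. -/
theorem palindrome_growth (hr : RevClosed t) {k n : ℕ} (hpal : PalWin t k n) (i : ℕ)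
    (hi : ∀ j < i, ∀ p, j ≤ p → SameWin t k p n → ¬ RSWin t (p - j) (n + 2 * j)) :
    (∀ p, i ≤ p → SameWin t k p n → PalWin t (p - i) (n + 2 * i)) ∧
    (∀ p p', i ≤ p → i ≤ p' → SameWin t k p n → SameWin t k p' n →
      SameWin t (p - i) (p' - i) (n + 2 * i)) := by
  induction i with
  | zero =>
    refine ⟨fun p _ hp j hj => ?_, fun p p' _ _ hp hp' j hj => ?_⟩
    · simp only [Nat.mul_zero, Nat.add_zero, Nat.sub_zero] at hj ⊢
      rw [← hp j hj, ← hp _ (by omega), hpal j hj]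
    · simp only [Nat.mul_zero, Nat.add_zero, Nat.sub_zero] at hj ⊢
      rw [← hp j hj, ← hp' j hj]
  | succ i ih =>
    obtain ⟨ihp, ihs⟩ := ih fun j hj => hi j (by omega)
    have right : ∀ p p', i ≤ p → i ≤ p' → SameWin t k p n → SameWin t k p' n →
        t (p + n + i) = t (p' + n + i) := by
      intro p p' h h' hp hp'
      by_contra hne
      refine hi i (by omega) p h hp ⟨p - i, p' - i, fun j _ => rfl, ihs p p' h h' hp hp', ?_⟩
      rwa [show p - i + (n + 2 * i) = p + n + i by omega,
        show p' - i + (n + 2 * i) = p' + n + i by omega]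
    have left : ∀ p, i + 1 ≤ p → SameWin t k p n → t (p - (i + 1)) = t (p + n + i) := by
      intro p h hp
      obtain ⟨l, hl⟩ := hr (p - (i + 1)) (n + 2 * i + 1)
      have hlp : SameWin t k (l + i) n := by
        intro j hj
        have h1 := hl (i + j) (by omega)
        have h2 := ihp p (by omega) hp (i + j) (by omega)
        rw [show l + i + j = l + (i + j) by omega, h1, hp j hj,
          show p + j = p - i + (i + j) by omega, h2]
        congr 1
        omega
      have h1 := hl (n + 2 * i) (by omega)
      have h2 := right p (l + i) (by omega) (by omega) hp hlp
      rw [h2, show l + i + n + i = l + (n + 2 * i) by omega, h1]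
      congr 1
      omega
    refine ⟨fun p h hp j hj => ?_, fun p p' h h' hp hp' j hj => ?_⟩
    · rcases Nat.eq_zero_or_pos j with rfl | hj0
      · rw [Nat.add_zero, left p h hp]
        congr 1
        omega
      · by_cases hjl : j = n + 2 * i + 1
        · rw [show p - (i + 1) + j = p + n + i by omega, ← left p h hp]
          congr 1
          omega
        · have := ihp p (by omega) hp (j - 1) (by omega)
          rw [show p - (i + 1) + j = p - i + (j - 1) by omega, this]
          congr 1
          omega
    · rcases Nat.eq_zero_or_pos j with rfl | hj0
      · simp only [Nat.add_zero]
        rw [left p h hp, left p' h' hp',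
          right p p' (by omega) (by omega) hp hp']
      · by_cases hjl : j = n + 2 * i + 1
        · rw [show p - (i + 1) + j = p + n + i by omega,
            show p' - (i + 1) + j = p' + n + i by omega,
            right p p' (by omega) (by omega) hp hp']
        · have := ihs p p' (by omega) (by omega) hp hp' (j - 1) (by omega)
          rw [show p - (i + 1) + j = p - i + (j - 1) by omega, this]
          congr 1
          omega

/-- Unless `t` is ultimately periodic, every non-empty palindromic factor grows in a unique way to a central
palindromic extension (by `N` letters on both sides) that is right special. -/
theorem palindrome_extension (hr : RevClosed t) (hper : ¬ UltimatelyPeriodic t) {k n : ℕ}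
    (hn : 0 < n) (hpal : PalWin t k n) :
    ∃ N, (∀ p, N ≤ p → SameWin t k p n → RSWin t (p - N) (n + 2 * N)) ∧
      ∀ i ≤ N, ∀ p, i ≤ p → SameWin t k p n → PalWin t (p - i) (n + 2 * i) := by
  classical
  by_cases hex : ∃ i, ∃ p, i ≤ p ∧ SameWin t k p n ∧ RSWin t (p - i) (n + 2 * i)
  · have hmin : ∀ j < Nat.find hex, ∀ p, j ≤ p → SameWin t k p n →
        ¬ RSWin t (p - j) (n + 2 * j) :=
      fun j hj p h hp hrs => Nat.find_min hex hj ⟨p, h, hp, hrs⟩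
    obtain ⟨p₀, h₀, hp₀, hrs⟩ := Nat.find_spec hex
    refine ⟨Nat.find hex, fun p h hp => ?_, fun i hi => ?_⟩
    · exact hrs.congr ((palindrome_growth hr hpal _ hmin).2 p₀ p h₀ h hp₀ hp)
    · exact (palindrome_growth hr hpal i fun j hj => hmin j (by omega)).1
  · exfalso
    push Not at hex
    apply hper
    obtain ⟨l, hl, hs⟩ := hr.recurrent k n (k + 1)
    refine ⟨l - k, k, by omega, fun m hm => ?_⟩
    -- Both occurrences of the palindrome are moved to the right to make room for `m` letters
    -- on their left.
    obtain ⟨p, hp, hps⟩ := hr.recurrent k (l + m + n + 1) m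
    have h1 : SameWin t k p n := fun i hi => hps i (by omega)
    have h2 : SameWin t k (p + (l - k)) n := by
      intro i hi
      have := hps (l - k + i) (by omega)
      rw [hs i hi, Nat.add_assoc, ← this]
      congr 1
      omega
    have := (palindrome_growth hr hpal m fun j _ p h hp => hex j p h hp).2 p (p + (l - k)) hp
      (by omega) h1 h2 (m + (m - k)) (by omega)
    have e1 := hps (m - k) (by omega)
    have e2 := hps (l - k + (m - k)) (by omega)
    rw [show p - m + (m + (m - k)) = p + (m - k) by omega,
      show p + (l - k) - m + (m + (m - k)) = p + (l - k + (m - k)) by omega] at this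
    rw [show m + (l - k) = k + (l - k + (m - k)) by omega, e2, ← this, ← e1]
    congr 1
    omega

/-! ### Returns to a right special palindrome -/

/-- If a right special factor contains the letter `a` that follows it, the word between the last `a`
and the new one is a palindrome: otherwise `a` and the longest common prefix of that word and its
reversal would form a right special factor different from the suffix of the given one. -/
theorem exists_pal_suffix (hr : RevClosed t) (hu : RSUnique t) {p n : ℕ} (hrs : RSWin t p n)
    (ha : ∃ i < n, t (p + i) = t (p + n)) :
    ∃ m, 2 ≤ m ∧ m ≤ n + 1 ∧ PalWin t (p + n + 1 - m) m := by
  classical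
  obtain ⟨i₀, hi₀, ha⟩ := ha
  let P : ℕ → Prop := fun d => d < n ∧ t (p + n - 1 - d) = t (p + n)
  have hex : ∃ d, P d := ⟨n - 1 - i₀, by omega, by rw [← ha]; congr 1; omega⟩
  obtain ⟨hdn, hd⟩ := Nat.find_spec hex
  have hmin : ∀ d' < Nat.find hex, t (p + n - 1 - d') ≠ t (p + n) := fun d' h h' =>
    Nat.find_min hex h ⟨by omega, h'⟩
  generalize Nat.find hex = d at hdn hd hmin
  refine ⟨d + 2, by omega, by omega, ?_⟩
  set j := p + n - 1 - d with hj
  rw [show p + n + 1 - (d + 2) = j by omega]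
  have inner : ∀ i < d, t (j + 1 + i) = t (p + n - 1 - i) := by
    by_contra hcon
    push Not at hcon
    obtain ⟨hid, hne⟩ := Nat.find_spec hcon
    have himin : ∀ i' < Nat.find hcon, t (j + 1 + i') = t (p + n - 1 - i') := fun i' h => by
      by_contra h'
      exact Nat.find_min hcon h ⟨by omega, h'⟩
    generalize Nat.find hcon = i at hid hne himin
    obtain ⟨l, hl⟩ := hr j (d + 2)
    have hrs' : RSWin t j (i + 1) := by
      refine ⟨j, l, fun _ _ => rfl, fun s hs => ?_, ?_⟩
      · rw [hl s (by omega)]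
        rcases Nat.eq_zero_or_pos s with rfl | hs0
        · rw [Nat.add_zero, hd]
          congr 1
          omega
        · have := himin (s - 1) (by omega)
          rw [show j + s = j + 1 + (s - 1) by omega, this]
          congr 1
          omega
      · rw [hl (i + 1) (by omega), show j + (i + 1) = j + 1 + i by omega,
          show j + (d + 2 - 1 - (i + 1)) = p + n - 1 - i by omega]
        exact hne
    have := hu _ _ _ hrs' (hrs.suffix (m := i + 1) (by omega)) 0 (by omega)
    refine hmin i hid ?_
    rw [← hd, ← Nat.add_zero j, this]
    congr 1
    omega
  intro s hs
  rcases Nat.eq_zero_or_pos s with rfl | hs0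
  · rw [Nat.add_zero, hd]
    congr 1
    omega
  · by_cases hsl : s = d + 1
    · rw [show j + s = p + n by omega, ← hd]
      congr 1
      omega
    · rw [show j + s = j + 1 + (s - 1) by omega, inner _ (by omega)]
      congr 1
      omega

theorem exists_next_occurrence (hr : RevClosed t) (hu : RSUnique t) (hper : ¬ UltimatelyPeriodic t)
    {p n : ℕ} (hrs : RSWin t p n) (hpal : PalWin t p n)
    (ha : ∃ i < n, t (p + i) = t (p + n)) :
    ∃ g, 0 < g ∧ g ≤ n ∧ SameWin t p (p + g) n := by
  classical
  let P : ℕ → Prop := fun m => PalWin t (p + n + 1 - m) m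
  obtain ⟨m₀, h2, hm₀, hP₀⟩ := exists_pal_suffix hr hu hrs ha
  have hle := Nat.findGreatest_le (P := P) (n + 1)
  have hge := Nat.le_findGreatest (P := P) hm₀ hP₀
  have hP : P (Nat.findGreatest P (n + 1)) := Nat.findGreatest_spec hm₀ hP₀
  have hmax : ∀ m', Nat.findGreatest P (n + 1) < m' → m' ≤ n + 1 → ¬ P m' :=
    fun m' h h' => Nat.findGreatest_is_greatest h h'
  generalize Nat.findGreatest P (n + 1) = m at hle hge hP hmax
  -- `D` is the distance between the left ends of `u` and of the palindromic suffix of `u a`.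
  obtain ⟨D, hD⟩ : ∃ D, D + m = n + 1 := ⟨n + 1 - m, by omega⟩
  have hs : p + n + 1 - m = p + D := by omega
  have hP' : PalWin t (p + D) m := by rw [← hs]; exact hP
  obtain ⟨N, hN1, hN2⟩ := palindrome_extension hr hper (by omega) hP'
  by_cases hND : D ≤ N
  · refine ⟨D + 1, by omega, by omega, fun i hi => ?_⟩
    have h1 := hN2 D hND (p + D) (by omega) (fun _ _ => rfl) (n - 1 - i) (by omega)
    rw [show p + D - D = p by omega] at h1
    rw [hpal i hi, h1]
    congr 1
    omega
  · push Not at hND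
    have hQ := hN1 (p + D) (by omega) fun _ _ => rfl
    have hQpal := hN2 N le_rfl (p + D) (by omega) fun _ _ => rfl
    by_cases hlen : n ≤ m + 2 * N
    · refine ⟨D - N, by omega, by omega, fun i hi => ?_⟩
      have h1 := hu _ _ _ hrs (hQ.suffix hlen) (n - 1 - i) (by omega)
      have h2 := hQpal i (by omega)
      rw [hpal i hi, h1, show p + (D - N) + i = p + D - N + i by omega, h2]
      congr 1
      omega
    · exfalso
      push Not at hlen
      have hpre : ∀ i < m + 2 * N, t (p + D - N + i) = t (p + i) := by
        intro i hi
        have h1 := hQpal i hi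
        have h2 := hu _ _ _ hQ (hrs.suffix hlen.le) (m + 2 * N - 1 - i) (by omega)
        rw [h1, h2, hpal i (by omega)]
        congr 1
        omega
      have hend : t (p + D - N - 1) = t (p + n) := by
        have h1 := hpre (m - 1 + N) (by omega)
        have h2 := hpal (m - 1 + N) (by omega)
        rw [show p + n = p + D - N + (m - 1 + N) by omega, h1, h2]
        congr 1
        omega
      refine hmax (N + m + 1) (by omega) (by omega) fun i hi => ?_
      rw [show p + n + 1 - (N + m + 1) = p + D - N - 1 by omega]
      rcases Nat.eq_zero_or_pos i with rfl | hi0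
      · rw [Nat.add_zero, hend]
        congr 1
        omega
      · by_cases hil : i = N + m
        · rw [show p + D - N - 1 + i = p + n by omega, ← hend]
          congr 1
          omega
        · have h1 := hpre (i - 1) (by omega)
          have h2 := hpal (i - 1) (by omega)
          rw [show p + D - N - 1 + i = p + D - N + (i - 1) by omega, h1, h2]
          congr 1
          omega

theorem exists_rs_palindrome_all_letters [Fintype A] (hr : RevClosed t) (hu : RSUnique t)
    (hper : ¬ UltimatelyPeriodic t) :
    ∃ k n, RSWin t k n ∧ PalWin t k n ∧ ∀ j, ∃ i < n, t (k + i) = t j := by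
  have hletter : ∀ j, ∃ k n, RSWin t k n ∧ PalWin t k n ∧ ∃ i < n, t (k + i) = t j := by
    intro j
    have hpal : PalWin t j 1 := by
      intro i hi
      obtain rfl : i = 0 := by omega
      rfl
    obtain ⟨N, h1, h2⟩ := palindrome_extension hr hper one_pos hpal
    obtain ⟨l, hl, hs⟩ := hr.recurrent j 1 N
    refine ⟨l - N, 1 + 2 * N, h1 l hl hs, h2 N le_rfl l hl hs, N, by omega, ?_⟩
    rw [show l - N + N = l + 0 by omega, ← hs 0 (by omega), Nat.add_zero]
  have hall : ∀ a : A, ∃ k n, RSWin t k n ∧ PalWin t k n ∧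
      ∀ j, t j = a → ∃ i < n, t (k + i) = a := by
    intro a
    by_cases h : ∃ j, t j = a
    · obtain ⟨j, rfl⟩ := h
      obtain ⟨k, n, h1, h2, h3⟩ := hletter j
      exact ⟨k, n, h1, h2, fun _ _ => h3⟩
    · obtain ⟨k, n, h1, h2, -⟩ := hletter 0
      exact ⟨k, n, h1, h2, fun j hj => (h ⟨j, hj⟩).elim⟩
  choose k n h1 h2 h3 using hall
  obtain ⟨a, -, ha⟩ := Finset.exists_max_image Finset.univ n ⟨t 0, Finset.mem_univ _⟩
  refine ⟨k a, n a, h1 a, h2 a, fun j => ?_⟩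
  obtain ⟨i, hi, hij⟩ := h3 (t j) j rfl
  have hle := ha (t j) (Finset.mem_univ _)
  have := hu _ _ _ (h1 (t j)) ((h1 a).suffix hle) i hi
  exact ⟨n a - n (t j) + i, by omega, by rw [← Nat.add_assoc, ← this, hij]⟩

end Windows

/-- every episturmian word is ultimately quasiperiodic, i.e. has a
quasiperiodic suffix. -/
theorem episturmian_ultimately_quasiperiodic
    {A : Type*} [Fintype A] (t : ℕ → A) (ht : EpisturmianC t) :
    ∃ k : ℕ, Quasiperiodic (fun n => t (n + k)) := by
  by_cases hper : UltimatelyPeriodic t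
  · exact quasiperiodic_of_ultimatelyPeriodic hper
  have hr := ht.revClosed
  have hu := ht.rsUnique
  obtain ⟨k, n, hrs, hpal, hall⟩ := exists_rs_palindrome_all_letters hr hu hper
  obtain ⟨i, hi, -⟩ := hall 0
  refine ⟨k, quasiperiodic_of_step (n := n) (by omega) fun p _ hp => ?_⟩
  have hpal' : PalWin t p n := fun i hi => by
    rw [← hp i hi, hpal i hi, hp _ (by omega)]
  have ha : ∃ i < n, t (p + i) = t (p + n) := by
    obtain ⟨i, hi, h⟩ := hall (p + n)
    exact ⟨i, hi, by rw [← hp i hi, h]⟩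
  obtain ⟨g, hg, hgn, hs⟩ := exists_next_occurrence hr hu hper (hrs.congr hp) hpal' ha
  exact ⟨g, hg, hgn, fun i hi => (hp i hi).trans (hs i hi)⟩

end EpiQP
end

section
/- A Sturmian word is non-quasiperiodic if and only if it has a unique spinned directive word. -/
/-!
The letter `a` is separating for `t` if no two consecutive letters differ from `a`. A Sturmian
word `t` over `{a, b}` has exactly one separating letter `a`, and this is the first letter of
each of its directive words. If `t` starts with `a`, then `t = L_a(t') = R_a(a t')`; otherwise
`t = R_a(t')` and no other desubstitution is possible. Since `x = R_a(w)` means `a x = L_a(w)`,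
everything is phrased with `L_a` alone (`IsL`). The class `Stu` of aperiodic recurrent words
with at most one right special factor of each length contains the Sturmian words and is closed
under desubstitution (`IsL.stu`), so that choosing `L` whenever possible gives a canonical
sequence `t = t₀, t₁, t₂, …` in this class (`Path`). Non-quasiperiodicity and uniqueness of the
directive word are both equivalent to: *all the words `tₙ` start with the same letter*.

* If the first letter changes for the first time after `tₙ`, then `tₙ = L_a(w)` with
  `w = tₙ₊₁` starting with `b`. Then `tₙ` is quasiperiodic (`quasiperiodic_of_ne`), and has two
  directive words (`multi_of_ne`): either `a w` is Sturmian and `L_a(w) = R_a(a w)`, or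
  `w = L_b(v) = R_b(b v)` with `b v` Sturmian. Both properties go up to `t`.
* If all the `tₙ` start with `a`, all the steps are `L_a` or `R_b`. These two morphisms send an
  unbordered word which starts with `a` and ends with `b` to a longer such word, hence `t` has
  arbitrarily long unbordered prefixes, whereas a prefix longer than a quasiperiod is bordered
  (`Path.not_quasiperiodic`). Another directive word would require some `a tₙ` to be recurrent,
  which `Path.not_rec_cons` excludes.
-/

namespace EpiQP

set_option linter.unusedSectionVars false

/-! ### Infinite words read positionwise -/

/-- The suffix of an infinite word starting at position `k`. -/
def shift {A : Type*} (k : ℕ) (w : ℕ → A) : ℕ → A := fun n => w (k + n)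

@[simp] lemma consInf_zero {A : Type*} (a : A) (w : ℕ → A) : consInf a w 0 = a := rfl

@[simp] lemma consInf_succ {A : Type*} (a : A) (w : ℕ → A) (n : ℕ) :
    consInf a w (n + 1) = w n := rfl

/-- Every prefix of `t` occurs in `t` at some positive position; this is equivalent to
`Recurrent t`. -/
def Rec {A : Type*} (t : ℕ → A) : Prop :=
  ∀ n, ∃ m, 0 < m ∧ ∀ i < n, t (m + i) = t i

lemma Rec.far {A : Type*} {t : ℕ → A} (h : Rec t) (k n N : ℕ) :
    ∃ m, N ≤ m ∧ ∀ i < n, t (m + i) = t (k + i) := by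
  have key : ∀ N, ∃ m, N ≤ m ∧ ∀ i < k + n, t (m + i) = t i := by
    intro N
    induction N with
    | zero => exact ⟨0, le_rfl, fun i _ => by simp⟩
    | succ N ih =>
      obtain ⟨m, hm, hmi⟩ := ih
      obtain ⟨m', hm', hmi'⟩ := h (m + (k + n))
      refine ⟨m' + m, by omega, fun i hi => ?_⟩
      rw [add_assoc, hmi' _ (by omega), hmi i hi]
  obtain ⟨m, hm, hmi⟩ := key N
  refine ⟨m + k, by omega, fun i hi => ?_⟩
  rw [add_assoc, hmi _ (by omega)]

lemma occursAt_prefWord {A : Type*} (k n m : ℕ) (t : ℕ → A) :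
    OccursAt (prefWord (shift k t) n) t m ↔ ∀ i < n, t (m + i) = t (k + i) := by
  unfold OccursAt prefWord shift
  simp only [List.length_ofFn, List.get_eq_getElem, List.getElem_ofFn]
  exact ⟨fun h i hi => (h i hi).symm, fun h i hi => (h i hi).symm⟩

lemma recurrent_iff {A : Type*} (t : ℕ → A) : Recurrent t ↔ Rec t := by
  constructor
  · intro h n
    obtain ⟨m, hm, ho⟩ := h (prefWord (shift 0 t) n) 0
      ((occursAt_prefWord 0 n 0 t).2 fun i _ => rfl) 1
    refine ⟨m, hm, fun i hi => ?_⟩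
    simpa using (occursAt_prefWord 0 n m t).1 ho i hi
  · intro h u k hu N
    obtain ⟨m, hm, hmi⟩ := h.far k u.length N
    exact ⟨m, hm, fun i hi => by rw [hmi i hi]; exact hu i hi⟩

/-- There is at most one right special factor of each length: `k, k'` are occurrences of
one right special factor of length `n`, followed by distinct letters, and `l, l'` are
occurrences of another one. -/
def RSU {A : Type*} (t : ℕ → A) : Prop :=
  ∀ n k k' l l', (∀ i < n, t (k + i) = t (k' + i)) → t (k + n) ≠ t (k' + n) →
    (∀ i < n, t (l + i) = t (l' + i)) → t (l + n) ≠ t (l' + n) →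
    ∀ i < n, t (k + i) = t (l + i)

lemma occursAt_append {A : Type*} (u v : List A) (t : ℕ → A) (m : ℕ) :
    OccursAt (u ++ v) t m ↔ OccursAt u t m ∧ OccursAt v t (m + u.length) := by
  unfold OccursAt
  simp only [List.get_eq_getElem, List.length_append]
  constructor
  · intro h
    refine ⟨fun i hi => ?_, fun i hi => ?_⟩
    · rw [← h i (by omega), List.getElem_append_left]
    · have := h (u.length + i) (by omega)
      rw [List.getElem_append_right (by omega)] at this
      simpa [add_assoc] using this
  · rintro ⟨h1, h2⟩ i hi
    by_cases hc : i < u.length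
    · rw [List.getElem_append_left hc]; exact h1 i hc
    · rw [List.getElem_append_right (by omega), h2 (i - u.length) (by omega)]
      congr 1; omega

lemma occursAt_singleton {A : Type*} (c : A) (t : ℕ → A) (m : ℕ) :
    OccursAt [c] t m ↔ c = t m := by
  unfold OccursAt
  simp

lemma occursAt_pair {A : Type*} (c d : A) (t : ℕ → A) (m : ℕ) :
    OccursAt [c, d] t m ↔ c = t m ∧ d = t (m + 1) := by
  have := occursAt_append [c] [d] t m
  simpa [occursAt_singleton] using this

lemma EpisturmianC.rsu {A : Type*} {t : ℕ → A} (h : EpisturmianC t) : RSU t := by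
  have rs : ∀ n k k', (∀ i < n, t (k + i) = t (k' + i)) → t (k + n) ≠ t (k' + n) →
      RightSpecial (prefWord (shift k t) n) t := by
    intro n k k' h1 h2
    refine ⟨_, _, h2, ⟨k, ?_⟩, ⟨k', ?_⟩⟩ <;>
      rw [occursAt_append, occursAt_prefWord, occursAt_singleton] <;>
      refine ⟨fun i hi => ?_, ?_⟩ <;> simp_all [prefWord]
  intro n k k' l l' h1 h2 h3 h4 i hi
  have := h.2 _ _ (rs n k k' h1 h2) (rs n l l' h3 h4) (by simp [prefWord])
  have := congrFun (List.ofFn_injective this) ⟨i, hi⟩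
  simpa [shift] using this

/-- A non-recurrent prefix would force all long enough prefixes to extend to palindromic
prefixes, and a palindromic prefix recurs at the end of any longer palindromic prefix. -/
lemma EpisturmianC.rec_of {A : Type*} {t : ℕ → A} (h : EpisturmianC t) : Rec t := by
  have rev : ∀ k n, ∃ m, ∀ i < n, t (m + i) = t (k + (n - 1 - i)) := by
    intro k n
    obtain ⟨m, hm⟩ := h.1 (prefWord (shift k t) n)
      ⟨k, (occursAt_prefWord k n k t).2 fun i _ => rfl⟩
    refine ⟨m, fun i hi => ?_⟩
    have := hm i (by simpa [prefWord] using hi)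
    simp only [prefWord, shift, List.get_eq_getElem, List.getElem_reverse, List.getElem_ofFn,
      List.length_ofFn] at this
    exact this.symm
  by_contra hR
  unfold Rec at hR
  push Not at hR
  obtain ⟨N, hN⟩ := hR
  have pal : ∀ n, N ≤ n → ∃ q, n ≤ q ∧ ∀ i < q, t i = t (q - 1 - i) := by
    intro n hn
    obtain ⟨m, hm⟩ := rev 0 n
    obtain ⟨j, hj⟩ := rev 0 (n + m)
    have hj0 : j = 0 := by
      by_contra hne
      obtain ⟨i, hi, hti⟩ := hN j (by omega)
      apply hti
      rw [hj i (by omega)]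
      have := hm (n - 1 - i) (by omega)
      rw [show 0 + (n + m - 1 - i) = m + (n - 1 - i) by omega, this]
      congr 1; omega
    subst hj0
    exact ⟨n + m, by omega, fun i hi => by simpa using hj i hi⟩
  obtain ⟨q, hq, hp⟩ := pal N le_rfl
  obtain ⟨q', hq', hp'⟩ := pal (q + 1) (by omega)
  obtain ⟨i, hi, hti⟩ := hN (q' - q) (by omega)
  apply hti
  rw [hp' _ (by omega), hp i (by omega)]
  congr 1; omega

/-! ### The morphisms `L_a` and `R_a` on infinite words -/

/-- The length of the image under `L_a` (or `R_a`) of the prefix of length `n` of `w`. -/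
def pos {A : Type*} [DecidableEq A] (a : A) (w : ℕ → A) : ℕ → ℕ
  | 0 => 0
  | n + 1 => pos a w n + if w n = a then 1 else 2

/-- `x = L_a(w)`. The image of the `n`-th letter starts with `a`, at position `pos a w n`;
the next letter of `x` is `w n` whether or not `w n = a`, because the image of every
letter starts with `a`. -/
def IsL {A : Type*} [DecidableEq A] (a : A) (w x : ℕ → A) : Prop :=
  ∀ n, x (pos a w n) = a ∧ x (pos a w n + 1) = w n

section
variable {A : Type*} [DecidableEq A] {a : A} {w w' x x' : ℕ → A}

@[simp] lemma pos_zero : pos a w 0 = 0 := rfl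

lemma pos_succ_eq {n : ℕ} (h : w n = a) : pos a w (n + 1) = pos a w n + 1 := by
  simp [pos, h]

lemma pos_succ_ne {n : ℕ} (h : w n ≠ a) : pos a w (n + 1) = pos a w n + 2 := by
  simp [pos, h]

lemma pos_strictMono : StrictMono (pos a w) := by
  apply strictMono_nat_of_lt_succ
  intro n
  by_cases h : w n = a
  · rw [pos_succ_eq h]; omega
  · rw [pos_succ_ne h]; omega

lemma pos_shift (k n : ℕ) : pos a w (k + n) = pos a w k + pos a (shift k w) n := by
  induction n with
  | zero => simp
  | succ n ih =>
    rw [← add_assoc]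
    simp only [pos, ih, shift, add_assoc]
    rfl

lemma IsL.suffix (h : IsL a w x) (k : ℕ) : IsL a (shift k w) (shift (pos a w k) x) := by
  intro n
  have := h (k + n)
  rw [pos_shift] at this
  simpa [shift, add_assoc] using this

lemma pos_cover (a : A) (w : ℕ → A) (j : ℕ) :
    ∃ n, j = pos a w n ∨ (j = pos a w n + 1 ∧ w n ≠ a) := by
  induction j with
  | zero => exact ⟨0, Or.inl rfl⟩
  | succ j ih =>
    obtain ⟨n, h | ⟨h, hn⟩⟩ := ih
    · by_cases hn : w n = a
      · exact ⟨n + 1, Or.inl (by rw [pos_succ_eq hn, h])⟩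
      · exact ⟨n, Or.inr ⟨by rw [h], hn⟩⟩
    · exact ⟨n + 1, Or.inl (by rw [pos_succ_ne hn, h])⟩

lemma IsL.zero (h : IsL a w x) : x 0 = a := (h 0).1

lemma IsL.last (h : IsL a w x) (n : ℕ) : x (pos a w (n + 1) - 1) = w n := by
  by_cases hn : w n = a
  · rw [pos_succ_eq hn, hn]; exact (h n).1
  · rw [pos_succ_ne hn]; exact (h n).2

/-- The letter `a` occurs in `L_a(w)` only at the beginning of images of letters. -/
lemma IsL.pos_of_eq (h : IsL a w x) {j : ℕ} (hj : x j = a) : ∃ n, j = pos a w n := by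
  obtain ⟨n, hn | ⟨hn, hne⟩⟩ := pos_cover a w j
  · exact ⟨n, hn⟩
  · exact absurd (by rw [← (h n).2, ← hn, hj]) hne

lemma IsL.pos_of_ne (h : IsL a w x) {j : ℕ} (hj : x j ≠ a) :
    ∃ n, j = pos a w n + 1 ∧ w n = x j := by
  obtain ⟨n, hn | ⟨hn, -⟩⟩ := pos_cover a w j
  · exact absurd (by rw [hn]; exact (h n).1) hj
  · exact ⟨n, hn, by rw [hn]; exact (h n).2.symm⟩

lemma IsL.agree (h : IsL a w x) (h' : IsL a w' x') (n : ℕ) (hw : ∀ j < n, w j = w' j) :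
    pos a w n = pos a w' n ∧ ∀ i ≤ pos a w n, x i = x' i := by
  induction n with
  | zero =>
    refine ⟨rfl, fun i hi => ?_⟩
    have : i = 0 := by simpa using hi
    rw [this, h.zero, h'.zero]
  | succ n ih =>
    obtain ⟨hp, hx⟩ := ih fun j hj => hw j (by omega)
    have hn := hw n (by omega)
    have hp' : pos a w (n + 1) = pos a w' (n + 1) := by simp only [pos, hp, hn]
    refine ⟨hp', fun i hi => ?_⟩
    by_cases h1 : i ≤ pos a w n
    · exact hx i h1
    by_cases h2 : i = pos a w n + 1
    · rw [h2, (h n).2, hp, (h' n).2, hn]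
    · have h3 : i = pos a w (n + 1) := by
        have : pos a w (n + 1) ≤ pos a w n + 2 := by simp only [pos]; split_ifs <;> omega
        omega
      rw [h3, (h _).1, hp', (h' _).1]

lemma IsL.reflect (h : IsL a w x) (h' : IsL a w' x') (n : ℕ)
    (hx : ∀ i ≤ pos a w n, x i = x' i) : ∀ j < n, w j = w' j := by
  induction n with
  | zero => simp
  | succ n ih =>
    have hlt : pos a w n < pos a w (n + 1) := pos_strictMono (Nat.lt_succ_self n)
    have ih' := ih fun i hi => hx i (by omega)
    intro j hj
    rcases Nat.lt_succ_iff_lt_or_eq.1 hj with hj | rfl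
    · exact ih' j hj
    · rw [← (h j).2, ← (h' j).2, ← (h.agree h' j ih').1]
      exact hx _ hlt

lemma IsL.inj (h : IsL a w x) (h' : IsL a w' x) : w = w' := by
  funext j
  exact h.reflect h' (j + 1) (fun _ _ => rfl) j (Nat.lt_succ_self j)

/-- `L_a(a w) = a L_a(w)`. -/
lemma IsL.cons (h : IsL a w x) : IsL a (consInf a w) (consInf a x) := by
  have hp : ∀ n, pos a (consInf a w) (n + 1) = pos a w n + 1 := by
    intro n
    induction n with
    | zero => simp [pos]
    | succ n ih => rw [pos, ih, consInf_succ, pos]; omega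
  intro n
  cases n with
  | zero => exact ⟨rfl, by simpa using h.zero⟩
  | succ n => rw [hp]; exact h n

/-- No two consecutive letters of `t` differ from `a`. -/
def Sep (a : A) (t : ℕ → A) : Prop := ∀ n, t n ≠ a → t (n + 1) = a

lemma IsL.sep (h : IsL a w x) : Sep a x := by
  intro j hj
  obtain ⟨n, hn, hw⟩ := h.pos_of_ne hj
  rw [hn, show pos a w n + 1 + 1 = pos a w (n + 1) from (pos_succ_ne (by rwa [hw])).symm]
  exact (h (n + 1)).1

lemma exists_isL (hs : Sep a x) (h0 : x 0 = a) : ∃ w, IsL a w x := by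
  let p : ℕ → ℕ := fun n => Nat.rec 0 (fun _ q => q + if x (q + 1) = a then 1 else 2) n
  have hp : ∀ n, x (p n) = a := by
    intro n
    induction n with
    | zero => exact h0
    | succ n ih =>
      change x (p n + if x (p n + 1) = a then 1 else 2) = a
      split_ifs with h
      · exact h
      · exact hs _ h
  have hpos : ∀ n, pos a (fun n => x (p n + 1)) n = p n := by
    intro n
    induction n with
    | zero => rfl
    | succ n ih => rw [pos, ih]
  refine ⟨fun n => x (p n + 1), fun n => ?_⟩
  rw [hpos]
  exact ⟨hp n, rfl⟩

lemma Sep.cons (hs : Sep a x) : Sep a (consInf a x) := by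
  intro n hn
  cases n with
  | zero => exact absurd rfl hn
  | succ n => exact hs n hn

lemma substOf_iff (f : A → List A)
    (hf : ∀ c, (f c).length = if c = a then 1 else 2) :
    SubstOf f w x ↔ ∀ n, OccursAt (f (w n)) x (pos a w n) := by
  have hsucc : ∀ n, (prefWord w (n + 1)).flatMap f = (prefWord w n).flatMap f ++ f (w n) := by
    intro n
    simp only [prefWord]
    rw [List.ofFn_succ_last]
    simp
  have hlen : ∀ n, ((prefWord w n).flatMap f).length = pos a w n := by
    intro n
    induction n with
    | zero => simp [prefWord]
    | succ n ih => rw [hsucc, List.length_append, ih, hf, pos]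
  have hpre : ∀ u : List A, IsPref u x ↔ OccursAt u x 0 := by
    intro u; simp [IsPref, OccursAt]
  unfold SubstOf
  simp only [hpre]
  constructor
  · intro h n
    have := h (n + 1)
    rw [hsucc, occursAt_append, hlen, zero_add] at this
    exact this.2
  · intro h n
    induction n with
    | zero => intro i hi; simp [prefWord] at hi
    | succ n ih =>
      rw [hsucc, occursAt_append, hlen, zero_add]
      exact ⟨ih, h n⟩

lemma muS_false (a c : A) : muS (a, false) [c] = if c = a then [a] else [a, c] := by
  simp [muS, Lm]

lemma muS_true (a c : A) : muS (a, true) [c] = if c = a then [a] else [c, a] := by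
  simp [muS, Rm]

lemma substOf_false : SubstOf (fun c => muS (a, false) [c]) w x ↔ IsL a w x := by
  rw [substOf_iff (a := a) _ (fun c => by rw [muS_false]; split_ifs <;> rfl)]
  simp only [muS_false]
  have h1 : ∀ n, OccursAt (if w n = a then [a] else [a, w n]) x (pos a w n) ↔
      x (pos a w n) = a ∧ (w n ≠ a → x (pos a w n + 1) = w n) := by
    intro n
    split_ifs with h
    · rw [occursAt_singleton]; simp [h, eq_comm]
    · rw [occursAt_pair]; simp [h, eq_comm]
  simp only [h1]
  constructor
  · intro h n
    refine ⟨(h n).1, ?_⟩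
    by_cases hn : w n = a
    · rw [← pos_succ_eq hn, (h (n + 1)).1, hn]
    · exact (h n).2 hn
  · exact fun h n => ⟨(h n).1, fun _ => (h n).2⟩

/-- `x = R_a(w)` if and only if `a x = L_a(w)`. -/
lemma substOf_true :
    SubstOf (fun c => muS (a, true) [c]) w x ↔ IsL a w (consInf a x) := by
  rw [substOf_iff (a := a) _ (fun c => by rw [muS_true]; split_ifs <;> rfl)]
  simp only [muS_true]
  have h1 : ∀ n, OccursAt (if w n = a then [a] else [w n, a]) x (pos a w n) ↔
      x (pos a w n) = w n ∧ (w n ≠ a → x (pos a w n + 1) = a) := by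
    intro n
    split_ifs with h
    · rw [occursAt_singleton]; simp [h, eq_comm]
    · rw [occursAt_pair]; simp [h, eq_comm]
  simp only [h1]
  constructor
  · intro h n
    refine ⟨?_, by simpa using (h n).1⟩
    cases n with
    | zero => rfl
    | succ n =>
      by_cases hn : w n = a
      · rw [pos_succ_eq hn, consInf_succ, (h n).1, hn]
      · rw [pos_succ_ne hn]; exact (h n).2 hn
  · intro h n
    refine ⟨by simpa using (h n).2, fun hn => ?_⟩
    have := (h (n + 1)).1
    rwa [pos_succ_ne hn] at this

end

/-! ### A class of words closed under desubstitution -/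

/-- Recurrent aperiodic words with at most one right special factor of each length. On a
two-letter alphabet these are the Sturmian words. -/
structure Stu {A : Type*} (t : ℕ → A) : Prop where
  rc : Rec t
  ap : ¬ UltimatelyPeriodic t
  rs : RSU t

section
variable {A : Type*} [DecidableEq A] {a : A} {w x : ℕ → A}

lemma IsL.rec_of (h : IsL a w x) (hx : Rec x) : Rec w := by
  intro n
  obtain ⟨m, hm, hmi⟩ := hx (pos a w n + 1)
  have h0 : x m = a := by rw [← h.zero, ← hmi 0 (by omega), add_zero]
  obtain ⟨k, rfl⟩ := h.pos_of_eq h0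
  refine ⟨k, ?_, ?_⟩
  · rcases Nat.eq_zero_or_pos k with rfl | hk
    · simp at hm
    · exact hk
  · intro i hi
    exact (h.reflect (h.suffix k) n (fun i hi => (hmi i (by omega)).symm) i hi).symm

lemma IsL.ultimatelyPeriodic (h : IsL a w x) (hw : UltimatelyPeriodic w) :
    UltimatelyPeriodic x := by
  obtain ⟨p, N, hp, hN⟩ := hw
  have hq : ∀ d, pos a w (N + d + p) + pos a w N = pos a w (N + d) + pos a w (N + p) := by
    intro d
    induction d with
    | zero => simp; omega
    | succ d ih =>
      have h1 := hN (N + d) (by omega)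
      have h2 : pos a w (N + (d + 1) + p) =
          pos a w (N + d + p) + if w (N + d + p) = a then 1 else 2 := by
        rw [show N + (d + 1) + p = N + d + p + 1 by omega]; rfl
      have h3 : pos a w (N + (d + 1)) =
          pos a w (N + d) + if w (N + d) = a then 1 else 2 := rfl
      rw [h1] at h2
      omega
  have hlt : pos a w N < pos a w (N + p) := pos_strictMono (by omega)
  refine ⟨pos a w (N + p) - pos a w N, pos a w N, by omega, fun j hj => ?_⟩
  obtain ⟨n, hn⟩ := pos_cover a w j
  have hnN : N ≤ n := by
    by_contra hc
    have h1 : pos a w (n + 1) ≤ pos a w N := pos_strictMono.monotone (by omega)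
    rcases hn with hn | ⟨hn, hne⟩
    · have : pos a w n < pos a w (n + 1) := pos_strictMono (Nat.lt_succ_self n)
      omega
    · rw [pos_succ_ne hne] at h1; omega
  have hqn := hq (n - N)
  rw [show N + (n - N) = n by omega] at hqn
  rcases hn with hn | ⟨hn, -⟩
  · rw [show j + (pos a w (N + p) - pos a w N) = pos a w (n + p) by omega, hn,
      (h _).1, (h _).1]
  · rw [show j + (pos a w (N + p) - pos a w N) = pos a w (n + p) + 1 by omega, hn,
      (h _).2, (h _).2, hN n hnN]

/-- If `u` is right special in `w`, then `L_a(u) a` is right special in `L_a(w)`. The right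
special factors of `L_a(w)` form a chain for the suffix order, and `{L_a(c) : c ∈ A}` is a
suffix code, so two right special factors of `w` of the same length coincide. -/
lemma IsL.rsu (h : IsL a w x) (hx : RSU x) : RSU w := by
  -- `lift` produces the right special factor `L_a(u) a` of `x`
  have lift : ∀ n k k', (∀ i < n, w (k + i) = w (k' + i)) → w (k + n) ≠ w (k' + n) →
      (∀ i < pos a (shift k w) n + 1, x (pos a w k + i) = x (pos a w k' + i)) ∧
      x (pos a w k + (pos a (shift k w) n + 1)) ≠ x (pos a w k' + (pos a (shift k w) n + 1)) := by
    intro n k k' h1 h2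
    obtain ⟨hp, hi⟩ := (h.suffix k).agree (h.suffix k') n h1
    refine ⟨fun i hi' => hi i (by omega), ?_⟩
    have e1 := (h (k + n)).2
    have e2 := (h (k' + n)).2
    rw [pos_shift] at e1 e2
    rw [← hp] at e2
    rw [← add_assoc, ← add_assoc, e1, e2]
    exact h2
  have main : ∀ n k k' l l', (∀ i < n, w (k + i) = w (k' + i)) → w (k + n) ≠ w (k' + n) →
      (∀ i < n, w (l + i) = w (l' + i)) → w (l + n) ≠ w (l' + n) →
      pos a (shift k w) n ≤ pos a (shift l w) n →
      ∀ i < n, w (k + i) = w (l + i) := by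
    intro n k k' l l' h1 h2 h3 h4 hle
    obtain ⟨e1, e2⟩ := lift n k k' h1 h2
    obtain ⟨f1, f2⟩ := lift n l l' h3 h4
    set N := pos a (shift k w) n with hN
    set M := pos a (shift l w) n with hM
    have heq := hx (N + 1) (pos a w k) (pos a w k') (pos a w l + (M - N)) (pos a w l' + (M - N))
      e1 e2 (fun i hi => by rw [add_assoc, add_assoc]; exact f1 _ (by omega))
      (by
        rw [add_assoc, add_assoc, show M - N + (N + 1) = M + 1 by omega]
        exact f2)
    have hk : pos a w (k + n) = pos a w k + N := pos_shift k n
    have hl : pos a w (l + n) = pos a w l + M := pos_shift l n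
    -- compare the two words from the right
    have back : ∀ j ≤ n, pos a w (k + n) + pos a w (l + (n - j)) =
          pos a w (l + n) + pos a w (k + (n - j)) ∧
        ∀ i, n - j ≤ i → i < n → w (k + i) = w (l + i) := by
      intro j
      induction j with
      | zero => exact fun _ => ⟨by simp only [Nat.sub_zero]; omega, fun i _ _ => by omega⟩
      | succ j ih =>
        intro hj
        obtain ⟨ih1, ih2⟩ := ih (by omega)
        have k1 := h.last (k + (n - (j + 1)))
        have l1 := h.last (l + (n - (j + 1)))
        have k2 : pos a w k < pos a w (k + (n - j)) := pos_strictMono (by omega)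
        have k3 : pos a w (k + (n - j)) ≤ pos a w (k + n) := pos_strictMono.monotone (by omega)
        have l2 : pos a w l < pos a w (l + (n - j)) := pos_strictMono (by omega)
        have k4 : pos a w (k + (n - (j + 1)) + 1) = pos a w (k + (n - (j + 1))) +
          if w (k + (n - (j + 1))) = a then 1 else 2 := rfl
        have l4 : pos a w (l + (n - (j + 1)) + 1) = pos a w (l + (n - (j + 1))) +
          if w (l + (n - (j + 1))) = a then 1 else 2 := rfl
        have hw : w (k + (n - (j + 1))) = w (l + (n - (j + 1))) := by
          rw [← k1, ← l1]
          have ek : k + (n - (j + 1)) + 1 = k + (n - j) := by omega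
          have el : l + (n - (j + 1)) + 1 = l + (n - j) := by omega
          rw [ek, el]
          have := heq (pos a w (k + (n - j)) - 1 - pos a w k) (by omega)
          rw [show pos a w k + (pos a w (k + (n - j)) - 1 - pos a w k)
              = pos a w (k + (n - j)) - 1 by omega,
            show pos a w l + (M - N) + (pos a w (k + (n - j)) - 1 - pos a w k)
              = pos a w (l + (n - j)) - 1 by omega] at this
          exact this
        rw [← hw] at l4
        rw [show k + (n - (j + 1)) + 1 = k + (n - j) by omega] at k4
        rw [show l + (n - (j + 1)) + 1 = l + (n - j) by omega] at l4
        refine ⟨by omega, fun i hi hin => ?_⟩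
        by_cases hc : i = n - (j + 1)
        · rw [hc]; exact hw
        · exact ih2 i (by omega) hin
    intro i hi
    exact (back n le_rfl).2 i (by omega) hi
  intro n k k' l l' h1 h2 h3 h4 i hi
  rcases le_total (pos a (shift k w) n) (pos a (shift l w) n) with hle | hle
  · exact main n k k' l l' h1 h2 h3 h4 hle i hi
  · exact (main n l l' k k' h3 h4 h1 h2 hle i hi).symm

lemma IsL.stu (h : IsL a w x) (hx : Stu x) : Stu w :=
  ⟨h.rec_of hx.rc, fun hw => hx.ap (h.ultimatelyPeriodic hw), h.rsu hx.rs⟩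

lemma Stu.cons (hw : Stu w) (hr : Rec (consInf a w)) : Stu (consInf a w) := by
  refine ⟨hr, ?_, ?_⟩
  · rintro ⟨p, N, hp, hN⟩
    refine hw.ap ⟨p, N, hp, fun n hn => ?_⟩
    have := hN (n + 1) (by omega)
    rwa [show n + 1 + p = n + p + 1 by omega] at this
  · have mv : ∀ n k, ∃ m, ∀ i < n, consInf a w (k + i) = w (m + i) := by
      intro n k
      obtain ⟨m, hm, hmi⟩ := hr.far k n 1
      refine ⟨m - 1, fun i hi => ?_⟩
      rw [← hmi i hi, show m + i = m - 1 + i + 1 by omega, consInf_succ]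
    intro n k k' l l' h1 h2 h3 h4 i hi
    obtain ⟨k₁, e1⟩ := mv (n + 1) k
    obtain ⟨k₂, e2⟩ := mv (n + 1) k'
    obtain ⟨l₁, e3⟩ := mv (n + 1) l
    obtain ⟨l₂, e4⟩ := mv (n + 1) l'
    rw [e1 i (by omega), e3 i (by omega)]
    refine hw.rs n k₁ k₂ l₁ l₂ (fun i hi => ?_) ?_ (fun i hi => ?_) ?_ i hi
    · rw [← e1 i (by omega), ← e2 i (by omega)]; exact h1 i hi
    · rw [← e1 n (by omega), ← e2 n (by omega)]; exact h2
    · rw [← e3 i (by omega), ← e4 i (by omega)]; exact h3 i hi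
    · rw [← e3 n (by omega), ← e4 n (by omega)]; exact h4

end

/-- The alphabet has at most two letters. -/
def Binary (A : Type*) : Prop := ∀ x y z : A, x ≠ y → z ≠ x → z = y

section
variable {A : Type*} [DecidableEq A] {a b : A} {w x t t' : ℕ → A}

lemma rec_cons_of (h : ∀ n, ∃ m, w m = a ∧ ∀ i < n, w (m + 1 + i) = w i) :
    Rec (consInf a w) := by
  intro n
  obtain ⟨m, hm, hmi⟩ := h n
  refine ⟨m + 1, by omega, fun i hi => ?_⟩
  cases i with
  | zero => exact hm
  | succ i =>
    rw [show m + 1 + (i + 1) = m + 1 + i + 1 by omega, consInf_succ, consInf_succ]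
    exact hmi i (by omega)

/-- If `t` does not start with its separating letter `a`, then `a t` is again Sturmian. -/
lemma Stu.cons_sep (ht : Stu t) (hs : Sep a t) (h0 : t 0 ≠ a) : Stu (consInf a t) := by
  refine ht.cons (rec_cons_of fun n => ?_)
  obtain ⟨m, hm, hmi⟩ := ht.rc (n + 1)
  refine ⟨m - 1, ?_, fun i hi => ?_⟩
  · by_contra hc
    have h1 := hs _ hc
    rw [show m - 1 + 1 = m + 0 by omega, hmi 0 (by omega)] at h1
    exact h0 h1
  · rw [show m - 1 + 1 = m by omega]; exact hmi i (by omega)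

/-- A Sturmian word can be extended to the left by some letter to a Sturmian word. -/
lemma Stu.exists_cons (h2 : Binary A) (ht : Stu t) (hab : a ≠ b) :
    Stu (consInf a t) ∨ Stu (consInf b t) := by
  by_contra hc
  push Not at hc
  have ext : ∀ c, ¬ Stu (consInf c t) → ∃ n, ∀ m, t m = c → ∃ i < n, t (m + 1 + i) ≠ t i := by
    intro c hcs
    by_contra hn
    push Not at hn
    exact hcs (ht.cons (rec_cons_of hn))
  obtain ⟨na, ha⟩ := ext a hc.1
  obtain ⟨nb, hb⟩ := ext b hc.2
  obtain ⟨m, hm, hmi⟩ := ht.rc (na + nb)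
  have key : ∀ i < na + nb, t (m - 1 + 1 + i) = t i := by
    intro i hi
    rw [show m - 1 + 1 = m by omega]; exact hmi i hi
  by_cases hma : t (m - 1) = a
  · obtain ⟨i, hi, hne⟩ := ha _ hma
    exact hne (key i (by omega))
  · obtain ⟨i, hi, hne⟩ := hb _ (h2 a b _ hab hma)
    exact hne (key i (by omega))

lemma Stu.exists_ne (ht : Stu t) (a : A) (N : ℕ) : ∃ n, N ≤ n ∧ t n ≠ a := by
  by_contra hc
  push Not at hc
  exact ht.ap ⟨1, N, one_pos, fun n hn => by rw [hc n hn, hc _ (by omega)]⟩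

lemma Stu.exists_eq (h2 : Binary A) (ht : Stu t) (a : A) (N : ℕ) : ∃ n, N ≤ n ∧ t n = a := by
  by_contra hc
  push Not at hc
  refine ht.ap ⟨1, N, one_pos, fun n hn => ?_⟩
  exact h2 a _ _ (hc n hn).symm (hc _ (by omega))

/-- If neither letter is separating, then both `aa` and `bb` are factors, so both letters are
right special. -/
lemma Stu.exists_sep (h2 : Binary A) (ht : Stu t) : ∃ a, Sep a t := by
  obtain ⟨k₀, -, hk₀⟩ := ht.exists_ne (t 0) 0
  set a := t 0 with ha
  set b := t k₀ with hb
  by_contra hc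
  push Not at hc
  have rsp : ∀ c d : A, c ≠ d → ∃ k k', t k = d ∧ t k' = d ∧ t (k + 1) ≠ t (k' + 1) := by
    intro c d hcd
    have hns : ∃ n, t n ≠ c ∧ t (n + 1) ≠ c := by
      have := hc c
      unfold Sep at this
      push Not at this
      exact this
    obtain ⟨k, hk, hk1⟩ := hns
    obtain ⟨m, hm, hmc⟩ := ht.exists_eq h2 c k
    have hlast : ∃ k', t k' ≠ c ∧ t (k' + 1) = c := by
      by_contra hno
      push Not at hno
      have : ∀ i, t (k + i) ≠ c := by
        intro i
        induction i with
        | zero => exact hk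
        | succ i ih => exact hno _ ih
      exact this (m - k) (by rw [show k + (m - k) = m by omega]; exact hmc)
    obtain ⟨k', hk', hk'1⟩ := hlast
    exact ⟨k, k', h2 c d _ hcd hk, h2 c d _ hcd hk', by rw [hk'1]; exact hk1⟩
  obtain ⟨k, k', e1, e2, e3⟩ := rsp a b (Ne.symm hk₀)
  obtain ⟨l, l', f1, f2, f3⟩ := rsp b a hk₀
  have := ht.rs 1 k k' l l' (fun i hi => by
      obtain rfl : i = 0 := by omega
      simp [e1, e2]) e3 (fun i hi => by
      obtain rfl : i = 0 := by omega
      simp [f1, f2]) f3 0 one_pos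
  simp only [add_zero, e1, f1] at this
  exact hk₀ this

lemma Stu.sep_unique (h2 : Binary A) (ht : Stu t) (ha : Sep a t) (hb : Sep b t) : a = b := by
  by_contra hab
  refine ht.ap ⟨2, 0, two_pos, fun n _ => ?_⟩
  by_cases h : t n = a
  · have h1 : t (n + 1) = b := hb n (by rw [h]; exact hab)
    rw [h]; exact ha (n + 1) (by rw [h1]; exact Ne.symm hab)
  · have h1 : t (n + 1) = a := ha n h
    rw [h2 a b _ hab h]
    exact hb (n + 1) (by rw [h1]; exact hab)

/-! ### Directive words -/

/-- The canonical desubstitution step: `t = L_a(t')` if `t` starts with its separating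
letter `a`, and `t = R_a(t')` (that is, `a t = L_a(t')`) otherwise. -/
def Step (a : A) (t t' : ℕ → A) : Prop :=
  (t 0 = a ∧ IsL a t' t) ∨ (t 0 ≠ a ∧ IsL a t' (consInf a t))

lemma Stu.exists_step (h2 : Binary A) (ht : Stu t) : ∃ a t', Stu t' ∧ Step a t t' := by
  obtain ⟨a, ha⟩ := ht.exists_sep h2
  by_cases h0 : t 0 = a
  · obtain ⟨w, hw⟩ := exists_isL ha h0
    exact ⟨a, w, hw.stu ht, Or.inl ⟨h0, hw⟩⟩
  · obtain ⟨w, hw⟩ := exists_isL ha.cons rfl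
    exact ⟨a, w, hw.stu (ht.cons_sep ha h0), Or.inr ⟨h0, hw⟩⟩

lemma Step.sep (h : Step a t t') : Sep a t := by
  rcases h with ⟨-, h⟩ | ⟨-, h⟩
  · exact h.sep
  · exact fun n hn => h.sep (n + 1) hn

/-- An infinite sequence of canonical desubstitution steps within the class `Stu`, with
separating letters `c n`. -/
structure Path (c : ℕ → A) (ts : ℕ → ℕ → A) : Prop where
  stu : ∀ n, Stu (ts n)
  step : ∀ n, Step (c n) (ts n) (ts (n + 1))

lemma Stu.exists_path (h2 : Binary A) (ht : Stu t) : ∃ c ts, ts 0 = t ∧ Path c ts := by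
  choose c f hf hs using fun s : {t : ℕ → A // Stu t} => s.2.exists_step h2
  let g : ℕ → {t : ℕ → A // Stu t} := fun n => Nat.rec ⟨t, ht⟩ (fun _ s => ⟨f s, hf s⟩) n
  exact ⟨fun n => c (g n), fun n => (g n).1, rfl, fun n => (g n).2, fun n => hs (g n)⟩

/-- Spin of the letter of a canonical step: `R` if the word does not start with it. -/
lemma Step.substOf (h : Step a t t') :
    SubstOf (fun d => muS (a, decide (t 0 ≠ a)) [d]) t' t := by
  rcases h with ⟨h0, h⟩ | ⟨h0, h⟩
  · simpa [h0] using substOf_false.2 h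
  · simpa [h0] using substOf_true.2 h

lemma Path.directs {c : ℕ → A} {ts : ℕ → ℕ → A} (hp : Path c ts) :
    Directs (fun n => (c n, decide (ts n 0 ≠ c n))) (ts 0) :=
  ⟨ts, rfl, fun n => (recurrent_iff _).2 (hp.stu n).rc, fun n => (hp.step n).substOf⟩

lemma Stu.exists_directs (h2 : Binary A) (ht : Stu t) : ∃ Δ, Directs Δ t := by
  obtain ⟨c, ts, rfl, hp⟩ := ht.exists_path h2
  exact ⟨_, hp.directs⟩

lemma directs_cons {s : A × Bool} {Δ : ℕ → A × Bool} (ht : Rec t)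
    (hs : SubstOf (fun d => muS s [d]) t' t) (h : Directs Δ t') : Directs (consInf s Δ) t := by
  obtain ⟨ts, h0, hr, hd⟩ := h
  refine ⟨fun n => Nat.casesOn n t ts, rfl, fun n => ?_, fun n => ?_⟩
  · cases n with
    | zero => exact (recurrent_iff _).2 ht
    | succ n => exact hr n
  · cases n with
    | zero => simpa [h0] using hs
    | succ n => exact hd n

/-- `t` has at least two directive words. -/
def Multi (t : ℕ → A) : Prop := ∃ Δ Δ' : ℕ → A × Bool, Δ ≠ Δ' ∧ Directs Δ t ∧ Directs Δ' t

lemma Multi.of_substOf {s : A × Bool} (ht : Rec t)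
    (hs : SubstOf (fun d => muS s [d]) t' t) (h : Multi t') : Multi t := by
  obtain ⟨Δ, Δ', hne, h1, h2⟩ := h
  refine ⟨consInf s Δ, consInf s Δ', fun he => hne ?_, directs_cons ht hs h1,
    directs_cons ht hs h2⟩
  funext n
  exact congrFun he (n + 1)

/-- If both `w` and `a w` are Sturmian, then `L_a(w) = R_a(a w)` has two directive words. -/
lemma multi_of_cons (h2 : Binary A) (h : IsL a w x) (hx : Rec x) (hw : Stu w)
    (haw : Stu (consInf a w)) : Multi x := by
  obtain ⟨Δ, hΔ⟩ := hw.exists_directs h2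
  obtain ⟨Δ', hΔ'⟩ := haw.exists_directs h2
  refine ⟨consInf (a, false) Δ, consInf (a, true) Δ', fun he => ?_,
    directs_cons hx (substOf_false.2 h) hΔ, directs_cons hx (substOf_true.2 h.cons) hΔ'⟩
  simpa using congrFun he 0

/-- If `w` starts with `b ≠ a`, then either `a w` is Sturmian, or `w = L_b(v)` with `b v`
Sturmian; in both cases `L_a(w)` has two directive words. -/
lemma multi_of_ne (h2 : Binary A) (h : IsL a w x) (hx : Stu x) (h0 : w 0 ≠ a) : Multi x := by
  have hw := h.stu hx
  obtain ⟨d, hd⟩ := hw.exists_sep h2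
  by_cases hda : d = a
  · subst hda
    exact multi_of_cons h2 h hx.rc hw (hw.cons_sep hd h0)
  · have hd0 : w 0 = d := h2 a d _ (Ne.symm hda) h0
    rcases hw.exists_cons h2 (Ne.symm hda) with hc | hc
    · exact multi_of_cons h2 h hx.rc hw hc
    · obtain ⟨v, hv⟩ := exists_isL hd hd0
      exact Multi.of_substOf hx.rc (substOf_false.2 h)
        (multi_of_cons h2 hv hw.rc (hv.stu hw) (hv.cons.stu hc))

/-! ### Quasiperiodicity -/

/-- The prefix of `t` of length `l` covers every position of `t`. -/
def Covered (l : ℕ) (t : ℕ → A) : Prop :=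
  ∀ j, ∃ k, k ≤ j ∧ j < k + l ∧ ∀ i < l, t (k + i) = t i

lemma isPref_append_iff (u v : List A) (t : ℕ → A) :
    IsPref (u ++ v) t ↔ IsPref u t ∧ OccursAt v t u.length := by
  have hpre : ∀ u : List A, IsPref u t ↔ OccursAt u t 0 := by
    intro u; simp [IsPref, OccursAt]
  rw [hpre, hpre, occursAt_append, zero_add]

lemma quasiperiodic_iff (t : ℕ → A) : Quasiperiodic t ↔ ∃ l, Covered l t := by
  constructor
  · rintro ⟨u, hu, p, hp0, hp, hpu⟩
    have hocc : ∀ n, OccursAt u t (p n).length := fun n => ((isPref_append_iff _ _ _).1 (hpu n)).2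
    have ho0 : OccursAt u t 0 := by simpa [hp0] using hocc 0
    refine ⟨u.length, fun j => ?_⟩
    have hupos : 0 < u.length := List.length_pos_of_ne_nil hu
    have : ∃ n, (p n).length ≤ j ∧ j < (p n).length + u.length := by
      induction j with
      | zero => exact ⟨0, by simp [hp0], by simpa [hp0] using hupos⟩
      | succ j ih =>
        obtain ⟨n, hn, hn'⟩ := ih
        by_cases hc : j + 1 < (p n).length + u.length
        · exact ⟨n, by omega, hc⟩
        · have := hp n
          exact ⟨n + 1, by omega, by omega⟩
    obtain ⟨n, hn, hn'⟩ := this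
    refine ⟨_, hn, hn', fun i hi => ?_⟩
    rw [← hocc n i hi, ho0 i hi, zero_add]
  · rintro ⟨l, hl⟩
    have hlpos : 0 < l := by
      obtain ⟨k, h1, h2, -⟩ := hl 0
      omega
    choose f hf1 hf2 hf3 using hl
    -- the occurrence covering the first position after a given one is the next block
    let g : ℕ → ℕ := fun n => Nat.rec 0 (fun _ k => f (k + l)) n
    have hg : ∀ n, ∀ i < l, t (g n + i) = t i := by
      intro n
      cases n with
      | zero => intro i _; change t (0 + i) = t i; rw [zero_add]
      | succ n => exact hf3 (g n + l)
    refine ⟨prefWord t l, ?_, fun n => prefWord t (g n), by simp [prefWord, g], fun n => ?_,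
      fun n => ?_⟩
    · intro h
      have := congrArg List.length h
      simp [prefWord] at this
      omega
    · have h1 := hf1 (g n + l)
      have h2 := hf2 (g n + l)
      have h3 : g (n + 1) = f (g n + l) := rfl
      simp only [prefWord, List.length_ofFn]
      omega
    · rw [isPref_append_iff]
      refine ⟨fun i hi => by simp [prefWord], fun i hi => ?_⟩
      have hi' : i < l := by simpa [prefWord] using hi
      simp [prefWord, hg n i hi']

/-- Each position `j` of `L_a(w)` or `R_a(w)` lies in the image of some letter of `w`. -/
lemma exists_block (a : A) (w : ℕ → A) (j : ℕ) :
    ∃ n, pos a w n ≤ j ∧ j < pos a w (n + 1) := by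
  obtain ⟨n, hn | ⟨hn, hne⟩⟩ := pos_cover a w j
  · exact ⟨n, hn.ge, by rw [hn]; exact pos_strictMono (Nat.lt_succ_self n)⟩
  · exact ⟨n, by omega, by rw [pos_succ_ne hne]; omega⟩

lemma Covered.image {l : ℕ} (hl : Covered l w)
    (hx : ∀ k, (∀ i < l, w (k + i) = w i) →
      pos a w (k + l) = pos a w k + pos a w l ∧
      ∀ i < pos a w l, x (pos a w k + i) = x i) : Covered (pos a w l) x := by
  intro j
  obtain ⟨n, hn1, hn2⟩ := exists_block a w j
  obtain ⟨k, hk1, hk2, hk3⟩ := hl n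
  obtain ⟨e1, e2⟩ := hx k hk3
  have h1 : pos a w k ≤ pos a w n := pos_strictMono.monotone hk1
  have h2 : pos a w (n + 1) ≤ pos a w (k + l) := pos_strictMono.monotone hk2
  exact ⟨pos a w k, by omega, by omega, e2⟩

lemma IsL.occ (h : IsL a w x) {k l : ℕ} (hk : ∀ i < l, w (k + i) = w i) :
    pos a w (k + l) = pos a w k + pos a w l ∧
      ∀ i ≤ pos a w l, x (pos a w k + i) = x i := by
  obtain ⟨e1, e2⟩ := h.agree (h.suffix k) l fun j hj => (hk j hj).symm
  exact ⟨by rw [pos_shift, e1], fun i hi => (e2 i hi).symm⟩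

lemma IsL.quasiperiodic (h : IsL a w x) (hw : Quasiperiodic w) : Quasiperiodic x := by
  obtain ⟨l, hl⟩ := (quasiperiodic_iff w).1 hw
  refine (quasiperiodic_iff x).2 ⟨_, hl.image (a := a) fun k hk => ?_⟩
  obtain ⟨e1, e2⟩ := h.occ hk
  exact ⟨e1, fun i hi => e2 i hi.le⟩

lemma IsL.quasiperiodic_cons (h : IsL a w (consInf a x)) (hw : Quasiperiodic w) :
    Quasiperiodic x := by
  obtain ⟨l, hl⟩ := (quasiperiodic_iff w).1 hw
  refine (quasiperiodic_iff x).2 ⟨_, hl.image (a := a) fun k hk => ?_⟩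
  obtain ⟨e1, e2⟩ := h.occ hk
  exact ⟨e1, fun i hi => e2 (i + 1) hi⟩

lemma Step.quasiperiodic (h : Step a t t') (ht : Quasiperiodic t') : Quasiperiodic t := by
  rcases h with ⟨-, h⟩ | ⟨-, h⟩
  · exact h.quasiperiodic ht
  · exact h.quasiperiodic_cons ht

/-- If `w` is Sturmian and starts with `b ≠ a`, then `L_a(w)` is quasiperiodic. If `aa` is not
a factor of `w`, then `aba` is a quasiperiod. Otherwise `w = R_a(v)` and
`L_a(w) = R_a(L_a(v))`, where `v` starts with `b` and has shorter runs of `a` than `w`. The induction is on the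
index `j + 1` of another letter `b` of `w`, which bounds the first run. -/
lemma quasiperiodic_of_ne (h2 : Binary A) (j : ℕ) : ∀ w x : ℕ → A, IsL a w x → Stu w →
    w 0 ≠ a → w (j + 1) ≠ a → Quasiperiodic x := by
  induction j using Nat.strong_induction_on with
  | _ j ih =>
  intro w x h hw h0 hj
  obtain ⟨d, hd⟩ := hw.exists_sep h2
  by_cases hda : d = a
  · subst hda
    obtain ⟨v, hv⟩ := exists_isL hd.cons rfl
    have hvS : Stu v := hv.stu (hw.cons_sep hd h0)
    have hv0 : v 0 = w 0 := ((hv 0).2).symm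
    obtain ⟨n, hn, hvn⟩ := hv.pos_of_ne (j := j + 2) hj
    have hn0 : n ≠ 0 := by
      rintro rfl
      simp at hn
    obtain ⟨n, rfl⟩ := Nat.exists_eq_succ_of_ne_zero hn0
    have hle : ∀ m, m + 2 ≤ pos d v (m + 1) := by
      intro m
      induction m with
      | zero => rw [pos_succ_ne (by rw [hv0]; exact h0)]; simp
      | succ m ihm =>
        have : pos d v (m + 1) < pos d v (m + 1 + 1) := pos_strictMono (Nat.lt_succ_self _)
        omega
    have := hle n
    simp only [Nat.succ_eq_add_one] at *
    refine h.cons.quasiperiodic_cons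
      (ih n (by omega) v (consInf d w) hv hvS (by rw [hv0]; exact h0) ?_)
    rw [hvn]; exact hj
  · have occ : ∀ n, w n ≠ a → x (pos a w n) = a ∧ x (pos a w n + 1) = d ∧
        x (pos a w n + 2) = a := by
      intro n hn
      refine ⟨(h n).1, ?_, ?_⟩
      · rw [(h n).2]; exact h2 a d _ (Ne.symm hda) hn
      · rw [← pos_succ_ne hn]; exact (h (n + 1)).1
    have occ' : ∀ n, w n ≠ a → ∀ i < 3, x (pos a w n + i) = x i := by
      intro n hn i hi
      obtain ⟨e1, e2, e3⟩ := occ n hn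
      obtain ⟨f1, f2, f3⟩ := occ 0 h0
      simp only [pos_zero, zero_add] at f1 f2 f3
      interval_cases i
      · rw [add_zero, e1, f1]
      · rw [e2, f2]
      · rw [e3, f3]
    refine (quasiperiodic_iff x).2 ⟨3, fun j => ?_⟩
    obtain ⟨n, hn1, hn2⟩ := exists_block a w j
    by_cases hn : w n = a
    · -- the letter before an `a` of `w` is not `a`
      cases n with
      | zero => exact absurd hn h0
      | succ n =>
        have hn' : w n ≠ a := by
          intro hc
          have := hd n (by rw [hc]; exact Ne.symm hda)
          rw [hn] at this
          exact hda this.symm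
        rw [pos_succ_eq hn] at hn2
        rw [pos_succ_ne hn'] at hn1 hn2
        exact ⟨pos a w n, by omega, by omega, occ' n hn'⟩
    · rw [pos_succ_ne hn] at hn2
      exact ⟨pos a w n, hn1, by omega, occ' n hn⟩

/-! ### Paths along which the first letter is constant -/

/-- The prefix of length `l` of `x` starts with `a`, ends with another letter, and has no
proper nonempty border. -/
structure Unbordered (a : A) (x : ℕ → A) (l : ℕ) : Prop where
  fst : x 0 = a
  lst : x (l - 1) ≠ a
  nb : ∀ d, 0 < d → d < l → ∃ i < l - d, x (d + i) ≠ x i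

lemma Unbordered.two_le {l : ℕ} (h : Unbordered a x l) : 2 ≤ l := by
  by_contra hc
  have : l - 1 = 0 := by omega
  exact h.lst (by rw [this]; exact h.fst)

lemma Unbordered.not_covered {l l₀ : ℕ} (h : Unbordered a x l) (hl : l₀ < l) :
    ¬ Covered l₀ x := by
  intro hc
  obtain ⟨k, h1, h2, h3⟩ := hc (l - 1)
  obtain ⟨i, hi, hne⟩ := h.nb k (by omega) (by omega)
  exact hne (h3 i (by omega))

lemma Unbordered.image_L {l : ℕ} (h : Unbordered a w l) (hx : IsL a w x) :
    Unbordered a x (pos a w l) ∧ l < pos a w l := by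
  have h2 := h.two_le
  obtain ⟨m, rfl⟩ : ∃ m, l = m + 1 := ⟨l - 1, by omega⟩
  have hm : w m ≠ a := h.lst
  have hlast : x (pos a w (m + 1) - 1) ≠ a := by rw [hx.last]; exact hm
  refine ⟨⟨hx.zero, hlast, fun d hd hdl => ?_⟩, ?_⟩
  · by_contra hc
    push Not at hc
    obtain ⟨k, rfl⟩ := hx.pos_of_eq (j := d) (by
      have := hc 0 (by omega)
      rwa [hx.zero, add_zero] at this)
    have hk : k < m + 1 := pos_strictMono.lt_iff_lt.1 hdl
    have hk0 : 0 < k := by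
      rcases Nat.eq_zero_or_pos k with rfl | hk
      · simp at hd
      · exact hk
    obtain ⟨i, hi, hne⟩ := h.nb k hk0 hk
    have hs := pos_shift (a := a) (w := w) k (m + 1 - k)
    rw [show k + (m + 1 - k) = m + 1 by omega] at hs
    refine hne ((hx.suffix k).reflect hx (m + 1 - k) (fun e he => ?_) i hi)
    by_cases hlt : e < pos a w (m + 1) - pos a w k
    · exact hc e hlt
    · -- the agreement extends one letter further, as both sides follow a letter `≠ a`
      have he' : pos a w k + e = pos a w (m + 1) := by omega
      change x (pos a w k + e) = x e
      rw [he', (hx _).1]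
      have e1 := hc (e - 1) (by omega)
      rw [show pos a w k + (e - 1) = pos a w (m + 1) - 1 by omega] at e1
      have := hx.sep (e - 1) (by rw [← e1]; exact hlast)
      rw [show e - 1 + 1 = e by omega] at this
      exact this.symm
  · rw [pos_succ_ne hm]
    have := (pos_strictMono (a := a) (w := w)).le_apply (x := m)
    omega

lemma Unbordered.image_R {l : ℕ} (h : Unbordered a w l) (hab : a ≠ b)
    (hx : IsL b w (consInf b x)) : Unbordered a x (pos b w l) ∧ l < pos b w l := by
  have h2 := h.two_le
  obtain ⟨m, rfl⟩ : ∃ m, l = m + 1 := ⟨l - 1, by omega⟩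
  have hw0 : w 0 = a := h.fst
  have hx0 : x 0 = a := by rw [← hw0]; exact (hx 0).2
  have hpos : ∀ n, n + 2 ≤ pos b w (n + 1) := by
    intro n
    induction n with
    | zero => rw [pos_succ_ne (by rw [hw0]; exact hab)]; simp
    | succ n ih =>
      have : pos b w (n + 1) < pos b w (n + 1 + 1) := pos_strictMono (Nat.lt_succ_self _)
      omega
  have hpm := hpos m
  refine ⟨⟨hx0, ?_, fun d hd hdl => ?_⟩, by omega⟩
  · have := (hx (m + 1)).1
    rw [show pos b w (m + 1) = pos b w (m + 1) - 1 + 1 by omega, consInf_succ] at this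
    rw [this]; exact Ne.symm hab
  · by_contra hc
    push Not at hc
    obtain ⟨k, hk', -⟩ := hx.pos_of_ne (j := d + 1) (by
      have := hc 0 (by omega)
      rw [add_zero] at this
      rw [consInf_succ, this, hx0]; exact hab)
    obtain rfl : d = pos b w k := by omega
    have hk : k < m + 1 := pos_strictMono.lt_iff_lt.1 hdl
    have hk0 : 0 < k := by
      rcases Nat.eq_zero_or_pos k with rfl | hk
      · simp at hd
      · exact hk
    obtain ⟨i, hi, hne⟩ := h.nb k hk0 hk
    have hs := pos_shift (a := b) (w := w) k (m + 1 - k)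
    rw [show k + (m + 1 - k) = m + 1 by omega] at hs
    refine hne ((hx.suffix k).reflect hx (m + 1 - k) (fun e he => ?_) i hi)
    cases e with
    | zero => exact (hx k).1
    | succ e => exact hc e (by omega)

lemma Stu.exists_unbordered (ht : Stu t) : ∃ l, Unbordered (t 0) t l := by
  have hex : ∃ n, t n ≠ t 0 := by
    obtain ⟨n, -, hn⟩ := ht.exists_ne (t 0) 0
    exact ⟨n, hn⟩
  classical
  refine ⟨Nat.find hex + 1, rfl, Nat.find_spec hex, fun d hd hdl => ?_⟩
  refine ⟨Nat.find hex - d, by omega, ?_⟩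
  rw [show d + (Nat.find hex - d) = Nat.find hex by omega]
  have := Nat.find_min hex (m := Nat.find hex - d) (by omega)
  rw [not_not.1 this]
  exact Nat.find_spec hex

variable {c : ℕ → A} {ts : ℕ → ℕ → A}

lemma Path.exists_unbordered (hp : Path c ts) (h0 : ∀ n, ts n 0 = a) (N : ℕ) :
    ∀ k, ∃ l, N ≤ l ∧ Unbordered a (ts k) l := by
  induction N with
  | zero =>
    intro k
    obtain ⟨l, hl⟩ := (hp.stu k).exists_unbordered
    exact ⟨l, Nat.zero_le _, by rwa [h0] at hl⟩
  | succ N ih =>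
    intro k
    obtain ⟨l, hl, hu⟩ := ih (k + 1)
    rcases hp.step k with ⟨e, h⟩ | ⟨e, h⟩
    · rw [← e, h0] at h
      obtain ⟨h1, h2⟩ := hu.image_L h
      exact ⟨_, by omega, h1⟩
    · rw [h0] at e
      obtain ⟨h1, h2⟩ := hu.image_R e h
      exact ⟨_, by omega, h1⟩

lemma Path.not_quasiperiodic (hp : Path c ts) (h0 : ∀ n, ts n 0 = a) :
    ¬ Quasiperiodic (ts 0) := by
  rw [quasiperiodic_iff]
  rintro ⟨l₀, hl₀⟩
  obtain ⟨l, hl, hu⟩ := hp.exists_unbordered h0 (l₀ + 1) 0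
  exact hu.not_covered hl hl₀

/-- Along a path with constant first letter `a`, no word extended to the left by `a` is
recurrent: if the next step is an `R`-step then `aa` is not a factor, and otherwise the
recurrence passes to the next word of the path, whose initial run of `a` is shorter. -/
lemma Path.not_rec_cons (hp : Path c ts) (h0 : ∀ n, ts n 0 = a) (j : ℕ) :
    ∀ k, ts k j ≠ a → ¬ Rec (consInf a (ts k)) := by
  induction j using Nat.strong_induction_on with
  | _ j ih =>
  intro k hj hr
  rcases hp.step k with ⟨e, h⟩ | ⟨e, h⟩
  · rw [← e, h0] at h
    obtain ⟨n, hn, hw⟩ := h.pos_of_ne hj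
    have hle := (pos_strictMono (a := a) (w := ts (k + 1))).le_apply (x := n)
    exact ih n (by omega) (k + 1) (by rw [hw]; exact hj) (h.cons.rec_of hr)
  · obtain ⟨m, hm, hmi⟩ := hr 2
    obtain ⟨m, rfl⟩ : ∃ m', m = m' + 1 := ⟨m - 1, by omega⟩
    have e1 : ts k m = a := hmi 0 (by omega)
    have e2 : ts k (m + 1) = a := by
      have : ts k (m + 1) = ts k 0 := hmi 1 (by omega)
      rw [this, h0]
    rw [h0] at e
    have := (hp.step k).sep m (by rw [e1]; exact e)
    exact e (by rw [← this, e2])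

lemma Path.unique_step (h2 : Binary A) (hp : Path c ts) (h0 : ∀ n, ts n 0 = a) (k : ℕ)
    {s : A × Bool} (hw : Rec w) (hs : SubstOf (fun d => muS s [d]) w (ts k)) :
    s = (c k, decide (ts k 0 ≠ c k)) ∧ w = ts (k + 1) := by
  obtain ⟨b, σ⟩ := s
  have hb : b = c k := by
    refine (hp.stu k).sep_unique h2 ?_ (hp.step k).sep
    cases σ with
    | false => exact (substOf_false.1 hs).sep
    | true => exact fun n hn => (substOf_true.1 hs).sep (n + 1) hn
  subst hb
  rcases hp.step k with ⟨e, h⟩ | ⟨e, h⟩ <;> cases σ with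
  | false =>
    have hs' := substOf_false.1 hs
    first
    | exact ⟨by simp [e], hs'.inj h⟩
    | exact absurd hs'.zero e
  | true =>
    have hs' := substOf_true.1 hs
    first
    | exact ⟨by simp [e], hs'.inj h⟩
    | exfalso
      have := hs'.inj h.cons
      rw [this, ← e, h0] at hw
      obtain ⟨j, -, hj⟩ := (hp.stu (k + 1)).exists_ne a 0
      exact hp.not_rec_cons h0 j (k + 1) hj hw

lemma Path.unique (h2 : Binary A) (hp : Path c ts) (h0 : ∀ n, ts n 0 = a)
    {Δ : ℕ → A × Bool} (hΔ : Directs Δ (ts 0)) :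
    Δ = fun n => (c n, decide (ts n 0 ≠ c n)) := by
  obtain ⟨us, hu0, hur, hus⟩ := hΔ
  have hu : ∀ n, us n = ts n := by
    intro n
    induction n with
    | zero => exact hu0
    | succ n ih =>
      have hs := hus n
      rw [ih] at hs
      exact (hp.unique_step h2 h0 n ((recurrent_iff _).1 (hur _)) hs).2
  funext n
  have hs := hus n
  rw [hu n] at hs
  exact (hp.unique_step h2 h0 n ((recurrent_iff _).1 (hur _)) hs).1

/-- At the first change of first letter the step is of the form `L_a`, and the next word does
not start with `a`. -/
lemma Path.of_change (h2 : Binary A) (hp : Path c ts) {n : ℕ}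
    (hn : ts (n + 1) 0 ≠ ts n 0) : Quasiperiodic (ts 0) ∧ Multi (ts 0) := by
  have hqm : Quasiperiodic (ts n) ∧ Multi (ts n) := by
    rcases hp.step n with ⟨e, h⟩ | ⟨e, h⟩
    · rw [e] at hn
      obtain ⟨j, hj, hjn⟩ := (hp.stu (n + 1)).exists_ne (c n) 1
      refine ⟨quasiperiodic_of_ne h2 (j - 1) _ _ h (hp.stu _) hn ?_,
        multi_of_ne h2 h (hp.stu n) hn⟩
      rwa [show j - 1 + 1 = j by omega]
    · exact absurd ((h 0).2).symm hn
  clear hn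
  induction n with
  | zero => exact hqm
  | succ n ih =>
    exact ih ⟨(hp.step n).quasiperiodic hqm.1,
      Multi.of_substOf (hp.stu n).rc (hp.step n).substOf hqm.2⟩

end

/-- a Sturmian word (an aperiodic episturmian word over a two-letter
alphabet) is non-quasiperiodic iff it has a unique spinned directive word. -/
theorem sturmian_nonquasiperiodic_iff_unique_directive
    {A : Type*} [Fintype A] [DecidableEq A] (hcard : Fintype.card A = 2)
    (t : ℕ → A) (ht : EpisturmianC t) (hap : ¬ UltimatelyPeriodic t) :
    ¬ Quasiperiodic t ↔ ∃! Δ : ℕ → A × Bool, Directs Δ t := by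
  have h2 : Binary A := by
    intro x y z hxy hzx
    by_contra hzy
    have h3 : ({x, y, z} : Finset A).card = 3 := by
      rw [Finset.card_eq_three]
      exact ⟨x, y, z, hxy, Ne.symm hzx, Ne.symm hzy, rfl⟩
    have := Finset.card_le_univ ({x, y, z} : Finset A)
    omega
  obtain ⟨c, ts, rfl, hp⟩ := Stu.exists_path h2 (t := t) ⟨ht.rec_of, hap, ht.rsu⟩
  by_cases hc : ∀ n, ts (n + 1) 0 = ts n 0
  · have h0 : ∀ n, ts n 0 = ts 0 0 := by
      intro n
      induction n with
      | zero => rfl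
      | succ n ih => rw [hc, ih]
    exact ⟨fun _ => ⟨_, hp.directs, fun Δ hΔ => hp.unique h2 h0 hΔ⟩,
      fun _ => hp.not_quasiperiodic h0⟩
  · push Not at hc
    obtain ⟨n, hn⟩ := hc
    obtain ⟨hq, Δ, Δ', hne, h, h'⟩ := hp.of_change h2 hn
    exact ⟨fun hnq => absurd hq hnq, fun hu => absurd (hu.unique h h') hne⟩

end EpiQP
end

section
/- Let A be a finite alphabet with at least two letters and let v = v1⋯vk be a finite word over A. The pure epistandard morphism μ_v = L_{v1}∘⋯∘L_{vk} is strongly quasiperiodic on A if and only if Alph(v) = A. Moreover, if Alph(v) = A, then Pal(v) is a quasiperiod of μ_v(w) for every infinite word w over A. -/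
/-!
The forward direction rests on Justin's formula `Pal (a v) = L_a (Pal v) a` (`Pal_cons`).
It holds because `L_a w · a` can only be cut in front of a letter `a` at the boundary of an
`L_a`-block, so the palindromic suffixes of `L_a w · a` that begin with `a` are exactly the words
`L_a s · a` with `s` a palindromic suffix of `w`; hence `(L_a w · a)⁽⁺⁾ = L_a (w⁽⁺⁾) · a`, and
the trailing `a` may be dropped on the left when `w` ends in a letter other than `a`.

Justin's formula gives by induction on `v` that `Pal v` is a prefix of `μ_v(b) Pal v` for every
letter `b`, and that `μ_v(b)` is a prefix of `Pal v` when `b` occurs in `v`. So in `μ_v(w)` the word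
`Pal v` occurs at the start of every block, and when `Alph(v) = A` it is at least as long as every
block: it covers `μ_v(w)`.

Conversely, if `b` does not occur in `v` and `c ≠ b`, then `μ_v(b c c c ⋯)` contains `b`, but
only inside its first block. A quasiperiod would have to contain `b`, in order to cover it, and
would therefore produce infinitely many occurrences of `b`.
-/

namespace EpiQP

/-! ### Longest palindromic suffixes and palindromic closure -/

/-- `w = u ++ s`, where `s` is the longest palindromic suffix of `w`. -/
def IsLPS {A : Type*} (w u s : List A) : Prop :=
  u ++ s = w ∧ s.reverse = s ∧
    ∀ u' s' : List A, u' ++ s' = w → s'.reverse = s' → s'.length ≤ s.length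

theorem palClosure_of_lps {A : Type*} [DecidableEq A] {w u s : List A} (h : IsLPS w u s) :
    palClosure w = w ++ u.reverse := by
  obtain ⟨rfl, hs, hmax⟩ := h
  have hk : Nat.findGreatest (fun k => ((u ++ s).drop ((u ++ s).length - k)).reverse =
      (u ++ s).drop ((u ++ s).length - k)) (u ++ s).length = s.length := by
    rw [Nat.findGreatest_eq_iff]
    refine ⟨by simp, fun _ => by simpa using hs, fun n hn hn' hp => ?_⟩
    have := hmax _ _ (List.take_append_drop ((u ++ s).length - n) (u ++ s)) hp
    rw [List.length_drop] at this
    omega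
  unfold palClosure
  rw [hk]
  simp

theorem exists_lps {A : Type*} [DecidableEq A] (w : List A) : ∃ u s, IsLPS w u s := by
  classical
  let P : ℕ → Prop := fun k => ∃ u s : List A, u ++ s = w ∧ s.reverse = s ∧ s.length = k
  have h0 : P 0 := ⟨w, [], by simp, rfl, rfl⟩
  obtain ⟨u, s, h1, h2, h3⟩ := Nat.findGreatest_spec (P := P) (Nat.zero_le w.length) h0
  refine ⟨u, s, h1, h2, fun u' s' h1' h2' => ?_⟩
  rw [h3]
  refine Nat.le_findGreatest ?_ ⟨u', s', h1', h2', rfl⟩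
  rw [← h1']
  simp

/-! ### The morphism `L_a` -/

section Lm
variable {A : Type*} [DecidableEq A] (a : A)

@[simp] theorem Lm_nil : Lm a [] = [] := rfl

theorem Lm_append (u w : List A) : Lm a (u ++ w) = Lm a u ++ Lm a w := by
  simp [Lm]

theorem Lm_cons (b : A) (w : List A) :
    Lm a (b :: w) = (if b = a then [a] else [a, b]) ++ Lm a w := rfl

theorem Lm_cons' (b : A) (w : List A) :
    ∃ t, Lm a (b :: w) = a :: t := by
  rw [Lm_cons]; split_ifs <;> simp

/-- `L_a w · a` begins with `a`. -/
theorem Lm_concat_head (w : List A) : ∃ t, Lm a w ++ [a] = a :: t := by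
  cases w with
  | nil => exact ⟨[], rfl⟩
  | cons b w =>
    obtain ⟨t, ht⟩ := Lm_cons' a b w
    exact ⟨t ++ [a], by simp [ht]⟩

/-- The mirror image of `L_a w` is `R_a` of the mirror image of `w`, which is conjugate to
`L_a` of it by the letter `a`. -/
theorem Lm_reverse (w : List A) : Lm a w.reverse ++ [a] = a :: (Lm a w).reverse := by
  induction w with
  | nil => rfl
  | cons b w ih =>
    have hb : Lm a [b] ++ [a] = a :: (if b = a then [a] else [a, b]).reverse := by
      simp only [Lm_cons, Lm_nil]; split_ifs with h <;> simp
    rw [List.reverse_cons, Lm_append, List.append_assoc, hb, Lm_cons, List.reverse_append,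
      ← List.cons_append, ← ih]
    simp

theorem Lm_injective : Function.Injective (Lm a) := by
  intro u
  induction u with
  | nil =>
    intro w h
    cases w with
    | nil => rfl
    | cons c w => obtain ⟨t, ht⟩ := Lm_cons' a c w; simp [ht] at h
  | cons b u ih =>
    intro w h
    cases w with
    | nil => obtain ⟨t, ht⟩ := Lm_cons' a b u; simp [ht] at h
    | cons c w =>
      -- after a block `a`, the next letter of an `L_a`-image cannot differ from `a`
      have key : ∀ (d : A) (z y : List A), d ≠ a → Lm a z ≠ d :: y := by
        intro d z y hd hz
        cases z with
        | nil => simp at hz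
        | cons e z => obtain ⟨t, ht⟩ := Lm_cons' a e z; rw [ht] at hz; simp at hz; exact hd hz.1.symm
      rw [Lm_cons, Lm_cons] at h
      split_ifs at h with h1 h2 h2
      · subst h1; subst h2
        rw [ih (List.append_cancel_left h)]
      · simp at h; exact absurd h (key _ _ _ h2)
      · simp at h; exact absurd h.symm (key _ _ _ h1)
      · simp at h
        rw [h.1, ih h.2]

theorem Lm_length_mono {s' s : List A} (h : s' <:+ s) : (Lm a s').length ≤ (Lm a s).length := by
  obtain ⟨t, rfl⟩ := h
  rw [Lm_append]; simp

/-- `L_a w · a` can be cut in front of a letter `a` only at a block boundary. -/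
theorem Lm_cut (w : List A) : ∀ (u t : List A), u ++ a :: t = Lm a w ++ [a] →
    ∃ w1 w2, w1 ++ w2 = w ∧ u = Lm a w1 ∧ a :: t = Lm a w2 ++ [a] := by
  induction w with
  | nil =>
    intro u t h
    have hu : u = [] := by
      have := congrArg List.length h
      simp at this
      exact List.eq_nil_of_length_eq_zero (by omega)
    subst hu
    exact ⟨[], [], rfl, rfl, h⟩
  | cons b w ih =>
    intro u t h
    rcases u with _ | ⟨c, u⟩
    · exact ⟨[], b :: w, rfl, rfl, h⟩
    · rw [Lm_cons] at h
      split_ifs at h with hb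
      · simp at h
        obtain ⟨w1, w2, e1, e2, e3⟩ := ih u t (by simpa using h.2)
        exact ⟨b :: w1, w2, by simp [e1], by simp [Lm_cons, hb, h.1, e2], e3⟩
      · rcases u with _ | ⟨d, u⟩
        · simp at h; exact absurd h.2.1.symm hb
        · simp at h
          obtain ⟨w1, w2, e1, e2, e3⟩ := ih u t (by simpa using h.2.2)
          exact ⟨b :: w1, w2, by simp [e1], by simp [Lm_cons, hb, h.1, h.2.1, e2], e3⟩

theorem Lm_pal {s : List A} (hs : s.reverse = s) :
    (Lm a s ++ [a]).reverse = Lm a s ++ [a] := by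
  have := Lm_reverse a s
  rw [hs] at this
  rw [this]
  conv_lhs => rw [← this]
  simp

theorem pal_of_Lm_pal {s : List A} (hs : (Lm a s ++ [a]).reverse = Lm a s ++ [a]) :
    s.reverse = s := by
  apply Lm_injective a
  have h := Lm_reverse a s
  have h2 : (Lm a s ++ [a]).reverse = a :: (Lm a s).reverse := by simp
  rw [← h2, hs] at h
  exact List.append_cancel_right h

/-- The longest palindromic suffix of `L_a w · a` is `L_a s · a`, where `s` is that of `w`. -/
theorem lps_Lm_concat {w u s : List A} (h : IsLPS w u s) :
    IsLPS (Lm a w ++ [a]) (Lm a u) (Lm a s ++ [a]) := by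
  obtain ⟨hw, hs, hmax⟩ := h
  refine ⟨by rw [← hw, Lm_append, List.append_assoc], Lm_pal a hs, fun u' s' h1 h2 => ?_⟩
  rcases List.eq_nil_or_concat' s' with rfl | ⟨t, c, rfl⟩
  · simp
  · rw [← List.append_assoc] at h1
    have hc : c = a := by simpa using (List.append_inj' h1 rfl).2
    subst hc
    -- being a palindrome that ends in `c`, the suffix also begins with `c`
    have h3 : t ++ [c] = c :: t.reverse := by rw [← h2]; simp
    rw [h3] at h2 ⊢
    rw [List.append_assoc, h3] at h1
    obtain ⟨w1, w2, e1, e2, e3⟩ := Lm_cut c w u' _ h1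
    rw [e3] at h2 ⊢
    have hl := hmax w1 w2 e1 (pal_of_Lm_pal c h2)
    have hsuf : w2 <:+ s :=
      List.suffix_of_suffix_length_le ⟨w1, e1⟩ ⟨u, hw⟩ hl
    have := Lm_length_mono c hsuf
    simpa using this

theorem palClosure_Lm_concat (w : List A) :
    palClosure (Lm a w ++ [a]) = Lm a (palClosure w) ++ [a] := by
  obtain ⟨u, s, h⟩ := exists_lps w
  rw [palClosure_of_lps h, palClosure_of_lps (lps_Lm_concat a h), Lm_append, List.append_assoc,
    List.append_assoc, Lm_reverse]
  simp

/-- In `L_a`-images each letter other than `a` is preceded by `a`. -/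
theorem Lm_before (w : List A) {x : A} (hx : x ≠ a) : ∀ (u t : List A), u ++ x :: t = Lm a w →
    ∃ u', u = u' ++ [a] := by
  induction w with
  | nil => intro u t h; simp at h
  | cons b w ih =>
    intro u t h
    rw [Lm_cons] at h
    split_ifs at h with hb
    · rcases u with _ | ⟨c, u⟩
      · simp at h; exact absurd h.1 hx
      · simp at h
        obtain ⟨u', rfl⟩ := ih u t h.2
        exact ⟨c :: u', rfl⟩
    · rcases u with _ | ⟨c, _ | ⟨d, u⟩⟩
      · simp at h; exact absurd h.1 hx
      · simp at h; exact ⟨[], by simp [h.1]⟩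
      · simp at h
        obtain ⟨u', rfl⟩ := ih u t h.2.2
        exact ⟨c :: d :: u', rfl⟩

/-- When `w = p x` with `x ≠ a`, the letter `a` is forced after `L_a w` in the palindromic
closure. -/
theorem palClosure_Lm (p : List A) {x : A} (hx : x ≠ a) :
    palClosure (Lm a (p ++ [x])) = palClosure (Lm a (p ++ [x]) ++ [a]) := by
  obtain ⟨u, s, h⟩ := exists_lps (p ++ [x])
  have h' := lps_Lm_concat a h
  obtain ⟨hw, hs, hmax⟩ := h
  have hwrap : ∀ z : List A, z.reverse = z → (a :: z ++ [a]).reverse = a :: z ++ [a] :=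
    fun z hz => by simp [hz]
  have hne : s ≠ [] := by
    rintro rfl
    simpa using hmax p [x] rfl rfl
  obtain ⟨b, s1, rfl⟩ := List.exists_cons_of_ne_nil hne
  obtain ⟨s0, hs0⟩ := Lm_cons' a b s1
  rw [hs0] at h'
  have hlps : IsLPS (Lm a (p ++ [x])) (Lm a u ++ [a]) s0 := by
    refine ⟨by rw [← hw, Lm_append, hs0]; simp, ?_, fun u' s' h1 h2 => ?_⟩
    · have := h'.2.1
      simpa using this
    · rcases List.eq_nil_or_concat' s' with rfl | ⟨t, c, rfl⟩
      · simp
      · have hc : c = x := by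
          have h3 := h1
          rw [Lm_append, Lm_cons, if_neg hx] at h3
          have h4 := congrArg List.getLast? h3
          simpa using h4
        subst hc
        have h3 : t ++ [c] = c :: t.reverse := by rw [← h2]; simp
        have h1' := h1
        rw [h3] at h1'
        obtain ⟨u'', rfl⟩ := Lm_before a _ hx _ _ h1'
        have := h'.2.2 u'' (a :: (t ++ [c]) ++ [a]) (by rw [← h1]; simp)
          (hwrap _ h2)
        simpa using this
  rw [palClosure_of_lps hlps, palClosure_of_lps h']
  simp

end Lm

/-! ### Justin's formula and the images of letters -/

section mu
variable {A : Type*} [DecidableEq A]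

theorem Pal_concat (v : List A) (x : A) : Pal (v ++ [x]) = palClosure (Pal v ++ [x]) := by
  simp [Pal]

/-- Justin's formula. -/
theorem Pal_cons (a : A) (v : List A) : Pal (a :: v) = Lm a (Pal v) ++ [a] := by
  induction v using List.reverseRecOn with
  | nil =>
    have h : IsLPS [a] [] [a] := ⟨rfl, rfl, fun u' s' h _ => by rw [← h]; simp⟩
    change palClosure ([] ++ [a]) = [a]
    rw [List.nil_append, palClosure_of_lps h]; rfl
  | append_singleton v x ih =>
    rw [← List.cons_append, Pal_concat, Pal_concat, ih, ← palClosure_Lm_concat]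
    by_cases hx : x = a
    · subst hx
      rw [Lm_append]
      simp [Lm_cons]
    · rw [← palClosure_Lm a _ hx, Lm_append]
      simp [Lm_cons, hx]

theorem muL_cons (a : A) (v u : List A) : muL (a :: v) u = Lm a (muL v u) := rfl

theorem muL_append (v u w : List A) : muL v (u ++ w) = muL v u ++ muL v w := by
  induction v with
  | nil => rfl
  | cons a v ih => rw [muL_cons, ih, Lm_append]; rfl

theorem muL_nil (v : List A) : muL v [] = [] := by
  induction v with
  | nil => rfl
  | cons a v ih => rw [muL_cons, ih]; rfl

theorem flatMap_muL (v u : List A) : u.flatMap (fun a => muL v [a]) = muL v u := by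
  induction u with
  | nil => rw [muL_nil]; rfl
  | cons b u ih => rw [List.flatMap_cons, ih, ← muL_append]; rfl

theorem mem_Lm {a b : A} {u : List A} (h : b ∈ u) : b ∈ Lm a u := by
  rw [Lm, List.mem_flatMap]
  refine ⟨b, h, ?_⟩
  split_ifs with hb <;> simp [hb]

theorem not_mem_Lm {a b : A} {u : List A} (hb : b ≠ a) (h : b ∉ u) : b ∉ Lm a u := by
  rw [Lm, List.mem_flatMap]
  rintro ⟨c, hc, hbc⟩
  split_ifs at hbc
  · simp at hbc; exact hb hbc
  · simp at hbc
    rcases hbc with h1 | rfl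
    · exact hb h1
    · exact h hc

theorem mem_muL (v : List A) {b : A} {u : List A} (h : b ∈ u) : b ∈ muL v u := by
  induction v with
  | nil => exact h
  | cons a v ih => exact mem_Lm ih

theorem not_mem_muL {v : List A} {b : A} {u : List A} (hv : b ∉ v) (h : b ∉ u) :
    b ∉ muL v u := by
  induction v with
  | nil => exact h
  | cons a v ih =>
    simp at hv
    exact not_mem_Lm hv.1 (ih hv.2)

theorem length_muL (v u : List A) : u.length ≤ (muL v u).length := by
  induction v with
  | nil => exact le_rfl
  | cons a v ih =>
    refine ih.trans ?_
    rw [muL_cons]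
    generalize muL v u = z
    induction z with
    | nil => simp
    | cons b z ih2 => rw [Lm_cons]; split_ifs <;> simp <;> omega

theorem muL_singleton_of_not_mem {v : List A} {b : A} (h : b ∉ v) :
    muL v [b] = Pal v ++ [b] := by
  induction v with
  | nil => rfl
  | cons a v ih =>
    simp at h
    rw [muL_cons, ih h.2, Lm_append, Pal_cons]
    simp [Lm_cons, h.1]

theorem muL_singleton_isPref {v : List A} {b : A} (h : b ∈ v) : muL v [b] <+: Pal v := by
  induction v with
  | nil => simp at h
  | cons a v ih =>
    rw [muL_cons, Pal_cons]
    by_cases hb : b ∈ v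
    · obtain ⟨r, hr⟩ := ih hb
      exact ⟨Lm a r ++ [a], by rw [← hr, Lm_append, List.append_assoc]⟩
    · have : b = a := by simpa [hb] using h
      subst this
      rw [muL_singleton_of_not_mem hb, Lm_append]
      simp [Lm_cons]

theorem Pal_prefix_muL (v z : List A) : Pal v <+: muL v z ++ Pal v := by
  induction v with
  | nil => exact ⟨_, rfl⟩
  | cons a v ih =>
    obtain ⟨r, hr⟩ := ih
    obtain ⟨t, ht⟩ := Lm_concat_head a r
    refine ⟨t, ?_⟩
    rw [muL_cons, Pal_cons, ← List.append_assoc, ← Lm_append, ← hr, Lm_append,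
      List.append_assoc (Lm a (Pal v)), List.append_assoc (Lm a (Pal v)), ht]
    rfl

end mu

/-! ### Infinite words -/

section inf
variable {A : Type*}

theorem IsPref.of_isPref {u z : List A} {x : ℕ → A} (hz : IsPref z x) (h : u <+: z) :
    IsPref u x := by
  intro i hi
  rw [← hz i (hi.trans_le h.length_le)]
  exact h.getElem hi

theorem prefWord_add (w : ℕ → A) (n m : ℕ) :
    prefWord w (n + m) = prefWord w n ++ prefWord (fun i => w (n + i)) m := by
  simp [prefWord, List.ofFn_add]

theorem prefWord_one (w : ℕ → A) : prefWord w 1 = [w 0] := by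
  simp [prefWord]

theorem length_prefWord (w : ℕ → A) (n : ℕ) : (prefWord w n).length = n := by
  simp [prefWord]

/-- A letterwise non-erasing substitution has an image on every infinite word. -/
theorem exists_subst [Inhabited A] (f : A → List A)
    (hf : ∀ u : List A, u.length ≤ (u.flatMap f).length)
    (w : ℕ → A) : ∃ x, SubstOf f w x := by
  refine ⟨fun i => ((prefWord w (i + 1)).flatMap f).getD i default, fun n i hi => ?_⟩
  have hi' : i < ((prefWord w (i + 1)).flatMap f).length := by
    have := hf (prefWord w (i + 1))
    rw [length_prefWord] at this
    omega
  change _ = ((prefWord w (i + 1)).flatMap f).getD i default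
  rw [List.getD_eq_getElem _ _ hi']
  have mono : ∀ n m, n ≤ m → (prefWord w n).flatMap f <+: (prefWord w m).flatMap f := by
    intro n m hnm
    obtain ⟨k, rfl⟩ := Nat.exists_eq_add_of_le hnm
    rw [prefWord_add, List.flatMap_append]
    exact List.prefix_append _ _
  rcases le_total n (i + 1) with h | h
  · exact (mono _ _ h).getElem hi
  · exact ((mono _ _ h).getElem hi').symm

/-- Every letter occurring in a quasiperiodic word occurs in it arbitrarily far. -/
theorem quasiperiodic_letter {x : ℕ → A} (hx : Quasiperiodic x) (i N : ℕ) :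
    ∃ j, N ≤ j ∧ x j = x i := by
  obtain ⟨u, -, p, h0, hstep, hpref⟩ := hx
  have hmono : StrictMono (fun n => (p n).length) := strictMono_nat_of_lt_succ fun n => (hstep n).1
  -- the last occurrence in the sequence that starts at or before `i` covers position `i`
  have hex : ∃ n, (p n).length ≤ i ∧ i < (p n).length + u.length := by
    have hP0 : (p 0).length ≤ i := by rw [h0]; simp
    refine ⟨Nat.findGreatest (fun n => (p n).length ≤ i) i,
      Nat.findGreatest_spec (P := fun n => (p n).length ≤ i) (Nat.zero_le i) hP0, ?_⟩
    refine lt_of_lt_of_le ?_ (hstep _).2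
    by_contra! hlt
    have h1 := hmono.le_apply.trans hlt
    have := Nat.le_findGreatest (P := fun n => (p n).length ≤ i) h1 hlt
    omega
  obtain ⟨n, hn1, hn2⟩ := hex
  have hk : i - (p n).length < u.length := by omega
  have hocc : ∀ m, x ((p m).length + (i - (p n).length)) = u[i - (p n).length] := by
    intro m
    have hlt : (p m).length + (i - (p n).length) < (p m ++ u).length := by simp; omega
    rw [← hpref m _ hlt]
    simp
  refine ⟨(p N).length + (i - (p n).length), ?_, ?_⟩
  · have : N ≤ (p N).length := hmono.le_apply
    omega
  · rw [hocc N, ← hocc n]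
    congr 1
    omega

variable [DecidableEq A]

theorem isQuasiperiod_Pal [Nonempty A] {v : List A} (hv : ∀ a, a ∈ v) {w x : ℕ → A}
    (h : SubstOf (fun a => muL v [a]) w x) : IsQuasiperiod (Pal v) x := by
  have hpos : ∀ b, 0 < (muL v [b]).length := fun b => by
    have := length_muL v [b]
    simp only [List.length_singleton] at this
    omega
  have hstep : ∀ n, muL v (prefWord w (n + 1)) = muL v (prefWord w n) ++ muL v [w n] := by
    intro n
    rw [prefWord_add, prefWord_one, muL_append]; rfl
  refine ⟨?_, fun n => muL v (prefWord w n), muL_nil v, fun n => ?_, fun n => ?_⟩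
  · obtain ⟨a⟩ := ‹Nonempty A›
    have h1 := (muL_singleton_isPref (hv a)).length_le
    exact List.ne_nil_of_length_pos ((hpos a).trans_le h1)
  · have := (muL_singleton_isPref (hv (w n))).length_le
    have := hpos (w n)
    beta_reduce
    rw [hstep, List.length_append]
    omega
  · -- `|Pal v|` further letters of `w` have an image long enough to contain `Pal v`
    have h1 := h (n + (Pal v).length)
    rw [flatMap_muL, prefWord_add, muL_append] at h1
    refine h1.of_isPref (List.prefix_append_right_inj _ |>.2 ?_)
    refine List.prefix_of_prefix_length_le (Pal_prefix_muL v _) (List.prefix_append _ _) ?_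
    have := length_muL v (prefWord (fun i => w (n + i)) (Pal v).length)
    rwa [length_prefWord] at this

theorem not_quasiperiodic_of_not_mem {v : List A} {b c : A} (hb : b ∉ v) (hc : c ≠ b) :
    ∃ w x : ℕ → A, SubstOf (fun a => muL v [a]) w x ∧ ¬ Quasiperiodic x := by
  have : Inhabited A := ⟨b⟩
  let w : ℕ → A := consInf b (fun _ => c)
  obtain ⟨x, hx⟩ := exists_subst (fun a => muL v [a])
    (fun u => by rw [flatMap_muL]; exact length_muL v u) w
  refine ⟨w, x, hx, fun hq => ?_⟩
  have hw0 : w 0 = b := rfl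
  have h1 := hx 1
  rw [flatMap_muL, prefWord_one, hw0] at h1
  obtain ⟨i, hi, hib⟩ := List.getElem_of_mem (mem_muL v (List.mem_singleton_self b))
  have hxi : x i = b := (h1 i hi).symm.trans hib
  obtain ⟨j, hj, hxj⟩ := quasiperiodic_letter hq i (muL v [b]).length
  rw [hxi] at hxj
  have h2 := hx (1 + (j + 1))
  rw [flatMap_muL, prefWord_add, muL_append, prefWord_one, hw0] at h2
  set z := prefWord (fun i => w (1 + i)) (j + 1) with hz
  have hlen := length_muL v z
  rw [hz, length_prefWord, ← hz] at hlen
  have hbz : b ∉ z := by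
    rw [hz, prefWord, List.mem_ofFn]
    rintro ⟨k, hk⟩
    have hk' : w (1 + (k : ℕ)) = c := by rw [Nat.add_comm]; rfl
    exact hc (hk'.symm.trans hk)
  have h3 := h2 j (by simp; omega)
  rw [hxj] at h3
  apply not_mem_muL hb hbz
  rw [List.get_eq_getElem] at h3
  rw [List.getElem_append_right hj] at h3
  rw [← h3]
  exact List.getElem_mem _

end inf

/-- for an alphabet `A` with at least two letters, the pure epistandard
morphism `μ_v` is strongly quasiperiodic on `A` iff `Alph(v) = A`; moreover, in
that case `Pal v` is a quasiperiod of `μ_v(w)` for every infinite word `w`. -/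
theorem epistandard_morphism_strongly_quasiperiodic
    {A : Type*} [Fintype A] [DecidableEq A] (hcard : 1 < Fintype.card A)
    (v : List A) :
    ((∀ w x : ℕ → A, SubstOf (fun a => muL v [a]) w x → Quasiperiodic x) ↔
      ∀ a : A, a ∈ v) ∧
    ((∀ a : A, a ∈ v) →
      ∀ w x : ℕ → A, SubstOf (fun a => muL v [a]) w x → IsQuasiperiod (Pal v) x) := by
  have : Nontrivial A := Fintype.one_lt_card_iff_nontrivial.1 hcard
  refine ⟨⟨fun h b => ?_, fun hv w x hx => ⟨_, isQuasiperiod_Pal hv hx⟩⟩,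
    fun hv w x hx => isQuasiperiod_Pal hv hx⟩
  by_contra hb
  obtain ⟨c, hc⟩ := exists_ne b
  obtain ⟨w, x, hx, hnq⟩ := not_quasiperiodic_of_not_mem hb hc
  exact hnq (h w x hx)

end EpiQP
end
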